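/- arXiv:2403.19494 — 9 statements merged into one kernel-verified Lean document; each statement's English description precedes it below -/
import Mathlib

section
/- Let n_e ≥ 1 be an integer, let k ∈ {0,1,...,n_e}, let L be a real number and let c_1,...,c_{n_e} be real numbers. Then L·1_{k=0} + Σ_{j=1}^{n_e} c_j·1_{k=j} = (Σ_{j=1}^{n_e} c_j)·1_{k≠0} + Σ_{j=1}^{n_e} (L + Σ_{k'=1,k'≠j}^{n_e} c_{k'})·1_{k≠j} − (n_e−1)·(L + Σ_{j=1}^{n_e} c_j). (This is the alternative expression of the deferral loss L_def(h,r,x,y) of Lemma 3.1, with k the deferred index r̂(x), L = L(h(x),y) the regression loss value and c_j = c_j(x,y) the expert costs.) -/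
/-- Lemma 3.1, pointwise form: alternative expression of the deferral loss.
Here `k ∈ {0,1,...,nE}` is the deferred index, `L` the regression loss value and
`c j` (for `j ∈ {1,...,nE}`) the expert costs. -/
theorem deferral_loss_alt_expression (nE : ℕ) (hnE : 1 ≤ nE) (k : ℕ) (hk : k ≤ nE)
    (L : ℝ) (c : ℕ → ℝ) :
    L * (if k = 0 then (1 : ℝ) else 0)
        + ∑ j ∈ Finset.Icc 1 nE, c j * (if k = j then (1 : ℝ) else 0)
      = (∑ j ∈ Finset.Icc 1 nE, c j) * (if k ≠ 0 then (1 : ℝ) else 0)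
        + (∑ j ∈ Finset.Icc 1 nE,
            (L + ∑ k' ∈ (Finset.Icc 1 nE).erase j, c k') * (if k ≠ j then (1 : ℝ) else 0))
        - ((nE : ℝ) - 1) * (L + ∑ j ∈ Finset.Icc 1 nE, c j) := by
  have hterm : ∀ j ∈ Finset.Icc 1 nE,
      (L + ∑ k' ∈ (Finset.Icc 1 nE).erase j, c k') * (if k ≠ j then (1 : ℝ) else 0)
        = (L + ∑ i ∈ Finset.Icc 1 nE, c i) - c j
          - (L + ∑ i ∈ Finset.Icc 1 nE, c i) * (if k = j then (1 : ℝ) else 0)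
          + c j * (if k = j then (1 : ℝ) else 0) := by
    intro j hj
    rw [← Finset.add_sum_erase _ c hj]
    by_cases h : k = j <;> simp [h]
    ring
  have hI : ∑ j ∈ Finset.Icc 1 nE, (if k = j then (1 : ℝ) else 0)
      = if k ≠ 0 then (1 : ℝ) else 0 := by
    rw [Finset.sum_ite_eq]
    congr 1
    simp only [Finset.mem_Icc, eq_iff_iff]
    omega
  rw [Finset.sum_congr rfl hterm, Finset.sum_add_distrib, Finset.sum_sub_distrib,
    Finset.sum_sub_distrib, ← Finset.mul_sum, hI, Finset.sum_const, Nat.card_Icc, nsmul_eq_mul]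
  by_cases h : k = 0
  · simp [h]
    ring
  · simp only [h, ne_eq, not_false_eq_true, if_true, if_false]
    push_cast [Nat.add_sub_cancel]
    ring
end

section
/- (Case I of the proof of Theorem 3.1, conditional form.) Let L ∈ A and s ∈ S satisfy sel(s) = 0, and assume c̄_0 ≤ c̄_j for all j = 1,...,n_e. Then the conditional surrogate regret dominates the conditional deferral regret: C(L,s) − C* ≥ L − c̄_0 = D(L,s) − D*. -/
open Finset

/-- Conditional deferral error `D(L,s)`. -/
noncomputable def Dcond (nE : ℕ) (cbar : Fin nE → ℝ)
    (sel : (Fin (nE + 1) → ℝ) → Fin (nE + 1)) (L : ℝ) (s : Fin (nE + 1) → ℝ) : ℝ :=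
  (if sel s = 0 then L else 0) + ∑ j : Fin nE, if sel s = j.succ then cbar j else 0

/-- Best-in-class conditional deferral error `D* = min{c̄₀, c̄₁, ..., c̄_{n_e}}`, with
`c̄₀ = sInf A`. -/
noncomputable def Dstar (nE : ℕ) (cbar : Fin nE → ℝ) (A : Set ℝ) : ℝ :=
  min (sInf A) (⨅ j, cbar j)

/-- Conditional surrogate error `C(L,s)`. -/
noncomputable def Ccond (nE : ℕ) (cbar : Fin nE → ℝ)
    (ℓ : (Fin (nE + 1) → ℝ) → Fin (nE + 1) → ℝ) (L : ℝ) (s : Fin (nE + 1) → ℝ) : ℝ :=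
  (∑ j, cbar j) * ℓ s 0
    + ∑ j : Fin nE, (L + ∑ j' ∈ univ.erase j, cbar j') * ℓ s j.succ
    - ((nE : ℝ) - 1) * L

/-- Best-in-class conditional surrogate error `C*`. -/
noncomputable def Cstar (nE : ℕ) (cbar : Fin nE → ℝ)
    (ℓ : (Fin (nE + 1) → ℝ) → Fin (nE + 1) → ℝ) (A : Set ℝ)
    (S : Set (Fin (nE + 1) → ℝ)) : ℝ :=
  sInf {u | ∃ L' ∈ A, ∃ s' ∈ S, u = Ccond nE cbar ℓ L' s'}

/-- Case I of the proof of Theorem 3.1, conditional form. -/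
theorem caseI_surrogate_regret_dominates (nE : ℕ) (hnE : 1 ≤ nE)
    (sel : (Fin (nE + 1) → ℝ) → Fin (nE + 1))
    (hsel : ∀ (s : Fin (nE + 1) → ℝ) (j : Fin (nE + 1)), s j ≤ s (sel s))
    (S : Set (Fin (nE + 1) → ℝ)) (hS : S.Nonempty)
    (ℓ : (Fin (nE + 1) → ℝ) → Fin (nE + 1) → ℝ)
    (hℓ0 : ∀ s j, 0 ≤ ℓ s j)
    (hℓ1 : ∀ s j, j ≠ sel s → 1 ≤ ℓ s j)
    (lbar : ℝ) (hlbar : 0 < lbar)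
    (C : Fin nE → ℝ) (hC : ∀ j, 0 < C j)
    (A : Set ℝ) (hA : A.Nonempty) (hAsub : A ⊆ Set.Icc 0 lbar)
    (cbar : Fin nE → ℝ) (hcbar : ∀ j, cbar j ∈ Set.Icc 0 (C j))
    (L : ℝ) (hL : L ∈ A) (s : Fin (nE + 1) → ℝ) (hs : s ∈ S)
    (hsel0 : sel s = 0)
    (hdom : ∀ j, sInf A ≤ cbar j) :
    L - sInf A ≤ Ccond nE cbar ℓ L s - Cstar nE cbar ℓ A S ∧
      L - sInf A = Dcond nE cbar sel L s - Dstar nE cbar A := by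
  have hn : (1 : ℝ) ≤ nE := by exact_mod_cast hnE
  have hbdd : BddBelow {u | ∃ L' ∈ A, ∃ s' ∈ S, u = Ccond nE cbar ℓ L' s'} := by
    refine ⟨-(((nE : ℝ) - 1) * lbar), ?_⟩
    rintro u ⟨L', hL', s', _, rfl⟩
    obtain ⟨h0, h1⟩ := hAsub hL'
    unfold Ccond
    have e1 : 0 ≤ (∑ j, cbar j) * ℓ s' 0 :=
      mul_nonneg (Finset.sum_nonneg fun j _ => (hcbar j).1) (hℓ0 _ _)
    have e2 : 0 ≤ ∑ j : Fin nE, (L' + ∑ j' ∈ univ.erase j, cbar j') * ℓ s' j.succ :=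
      Finset.sum_nonneg fun j _ => mul_nonneg
        (add_nonneg h0 (Finset.sum_nonneg fun j _ => (hcbar j).1)) (hℓ0 _ _)
    have e3 : ((nE : ℝ) - 1) * L' ≤ ((nE : ℝ) - 1) * lbar :=
      mul_le_mul_of_nonneg_left h1 (by linarith)
    linarith
  have hle : ∀ L' ∈ A, Cstar nE cbar ℓ A S ≤ Ccond nE cbar ℓ L' s := fun L' hL' =>
    csInf_le hbdd ⟨L', hL', s, hs, rfl⟩
  have hB : (nE : ℝ) ≤ ∑ j : Fin nE, ℓ s j.succ := by
    have h : ∑ j : Fin nE, (1 : ℝ) ≤ ∑ j : Fin nE, ℓ s j.succ :=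
      Finset.sum_le_sum fun j _ => hℓ1 s j.succ (by rw [hsel0]; exact Fin.succ_ne_zero j)
    simpa using h
  have hdiff : ∀ L' : ℝ, Ccond nE cbar ℓ L s - Ccond nE cbar ℓ L' s
      = (L - L') * (∑ j : Fin nE, ℓ s j.succ - ((nE : ℝ) - 1)) := by
    intro L'
    unfold Ccond
    simp only [add_mul, Finset.sum_add_distrib, ← Finset.mul_sum]
    ring
  constructor
  · have key : L - (Ccond nE cbar ℓ L s - Cstar nE cbar ℓ A S) ≤ sInf A := by
      refine le_csInf hA fun L' hL' => ?_
      rcases le_total L L' with h | h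
      · have := hle L hL
        linarith
      · have h1 := hle L' hL'
        have h2 := hdiff L'
        have h3 : (L - L') * 1 ≤ (L - L') * (∑ j : Fin nE, ℓ s j.succ - ((nE : ℝ) - 1)) :=
          mul_le_mul_of_nonneg_left (by linarith) (by linarith)
        linarith
    linarith
  · have : Nonempty (Fin nE) := ⟨⟨0, hnE⟩⟩
    have h1 : Dstar nE cbar A = sInf A := min_eq_left (le_ciInf hdom)
    have h2 : Dcond nE cbar sel L s = L := by
      unfold Dcond
      rw [hsel0]
      simp [(Fin.succ_ne_zero _).symm]
    rw [h1, h2]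
end

section
/- (Case II of the proof of Theorem 3.1, conditional form.) Assume S is regular and the pointwise Γ-consistency hypothesis holds with Γ(t) = β·t^α for some α ∈ (0,1] and β > 0. Let L ∈ A and s ∈ S, and assume c̄_0 > min_{1≤j≤n_e} c̄_j. Then C(L,s) − C* ≥ β^{−1/α}·(D(L,s) − D*)^{1/α} / (n_e·(l̄ + Σ_{j=1}^{n_e} C_j))^{1/α − 1}. -/
open Finset

/-- Final real-power manipulation. -/
theorem caseII_rpow_aux (α β d W B r R : ℝ) (hα0 : 0 < α) (hα1 : α ≤ 1) (hβ : 0 < β)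
    (hd : 0 ≤ d) (hW : 0 < W) (hWB : W ≤ B) (hr : 0 ≤ r) (hrR : r ≤ R / W)
    (h : d / W ≤ β * r ^ α) :
    β ^ (-(1 / α)) * d ^ (1 / α) / B ^ (1 / α - 1) ≤ R := by
  have hinv : 1 ≤ 1 / α := by
    rw [le_div_iff₀ hα0]; linarith
  have h1 : d / W / β ≤ r ^ α := by
    rw [div_le_iff₀ hβ]; linarith
  have h2 : (d / W / β) ^ (1 / α) ≤ r := by
    calc (d / W / β) ^ (1 / α) ≤ (r ^ α) ^ (1 / α) :=
          Real.rpow_le_rpow (by positivity) h1 (by positivity)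
      _ = r := by
          rw [← Real.rpow_mul hr, mul_one_div_cancel hα0.ne', Real.rpow_one]
  have h3 : (d / W / β) ^ (1 / α) * W ≤ R := by
    rw [← le_div_iff₀ hW]; linarith
  have h4 : (d / W / β) ^ (1 / α) * W = β ^ (-(1 / α)) * d ^ (1 / α) / W ^ (1 / α - 1) := by
    rw [Real.div_rpow (by positivity) hβ.le, Real.div_rpow hd hW.le, Real.rpow_neg hβ.le,
      Real.rpow_sub hW, Real.rpow_one]
    have := (Real.rpow_pos_of_pos hW (1 / α)).ne'
    have := (Real.rpow_pos_of_pos hβ (1 / α)).ne'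
    field_simp
  have h5 : W ^ (1 / α - 1) ≤ B ^ (1 / α - 1) :=
    Real.rpow_le_rpow hW.le hWB (by linarith)
  calc β ^ (-(1 / α)) * d ^ (1 / α) / B ^ (1 / α - 1)
      ≤ β ^ (-(1 / α)) * d ^ (1 / α) / W ^ (1 / α - 1) := by
        apply div_le_div_of_nonneg_left (by positivity) (by positivity) h5
    _ ≤ R := by rw [← h4]; exact h3

/-- Case II of the proof of Theorem 3.1, conditional form. -/
theorem caseII_surrogate_regret_lower_bound (nE : ℕ) (hnE : 1 ≤ nE)
    (sel : (Fin (nE + 1) → ℝ) → Fin (nE + 1))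
    (hsel : ∀ (s : Fin (nE + 1) → ℝ) (j : Fin (nE + 1)), s j ≤ s (sel s))
    (S : Set (Fin (nE + 1) → ℝ)) (hS : S.Nonempty)
    (hreg : ∀ j : Fin (nE + 1), ∃ s ∈ S, sel s = j)
    (ℓ : (Fin (nE + 1) → ℝ) → Fin (nE + 1) → ℝ)
    (hℓ0 : ∀ s j, 0 ≤ ℓ s j)
    (hℓ1 : ∀ s j, j ≠ sel s → 1 ≤ ℓ s j)
    (lbar : ℝ) (hlbar : 0 < lbar)
    (C : Fin nE → ℝ) (hC : ∀ j, 0 < C j)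
    (A : Set ℝ) (hA : A.Nonempty) (hAsub : A ⊆ Set.Icc 0 lbar)
    (cbar : Fin nE → ℝ) (hcbar : ∀ j, cbar j ∈ Set.Icc 0 (C j))
    (α β : ℝ) (hα : α ∈ Set.Ioc (0 : ℝ) 1) (hβ : 0 < β)
    (hcons : ∀ p : Fin (nE + 1) → ℝ, (∀ j, 0 ≤ p j) → (∑ j, p j) = 1 → ∀ s ∈ S,
      (∑ j, p j * (if sel s ≠ j then (1 : ℝ) else 0))
          - sInf {v | ∃ s' ∈ S, v = ∑ j, p j * (if sel s' ≠ j then (1 : ℝ) else 0)}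
        ≤ β * ((∑ j, p j * ℓ s j)
          - sInf {v | ∃ s' ∈ S, v = ∑ j, p j * ℓ s' j}) ^ α)
    (L : ℝ) (hL : L ∈ A) (s : Fin (nE + 1) → ℝ) (hs : s ∈ S)
    (hlt : (⨅ j, cbar j) < sInf A) :
    β ^ (-(1 / α)) * (Dcond nE cbar sel L s - Dstar nE cbar A) ^ (1 / α)
        / ((nE : ℝ) * (lbar + ∑ j, C j)) ^ (1 / α - 1)
      ≤ Ccond nE cbar ℓ L s - Cstar nE cbar ℓ A S := by
  obtain ⟨hα0, hα1⟩ := hα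
  have : Nonempty (Fin nE) := ⟨⟨0, hnE⟩⟩
  obtain ⟨m, hm⟩ := exists_eq_ciInf_of_finite (f := cbar)
  have hbA : BddBelow A := ⟨0, fun x hx => (hAsub hx).1⟩
  have hLA : sInf A ≤ L := csInf_le hbA hL
  have hmin : ∀ j, cbar m ≤ cbar j := fun j => by
    rw [hm]; exact ciInf_le (Set.finite_range cbar).bddBelow j
  have hm0 : 0 ≤ cbar m := (hcbar m).1
  have hmL : cbar m < L := by rw [hm]; linarith
  have hDstar : Dstar nE cbar A = cbar m := by
    rw [Dstar, min_eq_right hlt.le, hm]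
  have hsum0 : 0 ≤ ∑ j, cbar j := Finset.sum_nonneg fun j _ => (hcbar j).1
  have hnR : (1 : ℝ) ≤ nE := by exact_mod_cast hnE
  -- extended costs
  set T : ℝ := L + ∑ j, cbar j with hT
  have hTpos : 0 < T := by linarith
  set c : Fin (nE + 1) → ℝ := Fin.cons L cbar with hc
  have hcsum : ∑ j, c j = T := by simp [hc, Fin.sum_univ_succ, hT]
  have hcnn : ∀ j, 0 ≤ c j := by
    intro j
    refine Fin.cases ?_ (fun i => ?_) j
    · simp only [hc, Fin.cons_zero]; linarith
    · simp only [hc, Fin.cons_succ]; exact (hcbar i).1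
  have hcle : ∀ j, c j ≤ T := fun j => by
    rw [← hcsum]; exact Finset.single_le_sum (fun i _ => hcnn i) (mem_univ j)
  have hcm : ∀ j, cbar m ≤ c j := by
    intro j
    refine Fin.cases ?_ (fun i => ?_) j
    · simp only [hc, Fin.cons_zero]; linarith
    · simp only [hc, Fin.cons_succ]; exact hmin i
  have hD : Dcond nE cbar sel L s = c (sel s) := by
    unfold Dcond
    generalize sel s = k
    refine Fin.cases ?_ (fun i => ?_) k
    · have : ∀ j : Fin nE, (0 : Fin (nE + 1)) ≠ j.succ := fun j => (Fin.succ_ne_zero j).symm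
      simp [hc, this]
    · simp [hc, Fin.succ_ne_zero]
  set W : ℝ := nE * T with hW
  have hWpos : 0 < W := by positivity
  have hCc : ∀ s', Ccond nE cbar ℓ L s' = (∑ j, (T - c j) * ℓ s' j) - ((nE : ℝ) - 1) * L := by
    intro s'
    unfold Ccond
    rw [Fin.sum_univ_succ]
    have : ∀ j : Fin nE, L + ∑ j' ∈ univ.erase j, cbar j' = T - cbar j := by
      intro j
      have := Finset.add_sum_erase univ cbar (mem_univ j)
      rw [hT]; linarith
    simp only [this, hc, Fin.cons_zero, Fin.cons_succ]
    rw [hT]; ring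
  set p : Fin (nE + 1) → ℝ := fun j => (T - c j) / W with hp
  have hp0 : ∀ j, 0 ≤ p j := fun j => div_nonneg (sub_nonneg.2 (hcle j)) hWpos.le
  have hp1 : ∑ j, p j = 1 := by
    simp only [hp]
    rw [← Finset.sum_div, Finset.sum_sub_distrib, hcsum, div_eq_one_iff_eq hWpos.ne']
    simp [hW]; ring
  have h01 : ∀ s', ∑ j, p j * (if sel s' ≠ j then (1 : ℝ) else 0) = 1 - p (sel s') := by
    intro s'
    have e := Finset.add_sum_erase univ p (mem_univ (sel s'))
    rw [hp1] at e
    rw [← Finset.add_sum_erase univ _ (mem_univ (sel s'))]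
    simp only [ne_eq, not_true_eq_false, if_false, mul_zero, zero_add]
    rw [eq_sub_iff_add_eq']
    refine Eq.trans ?_ e
    congr 1
    refine Finset.sum_congr rfl fun j hj => ?_
    rw [if_pos (Finset.ne_of_mem_erase hj).symm, mul_one]
  have hpl : ∀ s', ∑ j, p j * ℓ s' j = (Ccond nE cbar ℓ L s' + ((nE : ℝ) - 1) * L) / W := by
    intro s'
    rw [hCc, sub_add_cancel, Finset.sum_div]
    exact Finset.sum_congr rfl fun j _ => by simp only [hp]; ring
  have hbC : BddBelow {u | ∃ L' ∈ A, ∃ s' ∈ S, u = Ccond nE cbar ℓ L' s'} := by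
    refine ⟨-(((nE : ℝ) - 1) * lbar), ?_⟩
    rintro u ⟨L', hL', s', -, rfl⟩
    unfold Ccond
    have h1 : 0 ≤ (∑ j, cbar j) * ℓ s' 0 := mul_nonneg hsum0 (hℓ0 _ _)
    have h2 : 0 ≤ ∑ j : Fin nE, (L' + ∑ j' ∈ univ.erase j, cbar j') * ℓ s' j.succ :=
      Finset.sum_nonneg fun j _ => mul_nonneg
        (add_nonneg (hAsub hL').1 (Finset.sum_nonneg fun i _ => (hcbar i).1)) (hℓ0 _ _)
    have h3 : ((nE : ℝ) - 1) * L' ≤ ((nE : ℝ) - 1) * lbar :=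
      mul_le_mul_of_nonneg_left (hAsub hL').2 (by linarith)
    linarith
  have key := hcons p hp0 hp1 s hs
  set X := sInf {v | ∃ s' ∈ S, v = ∑ j, p j * ℓ s' j} with hX
  set Y := sInf {v | ∃ s' ∈ S, v = ∑ j, p j * (if sel s' ≠ j then (1 : ℝ) else 0)} with hY
  have hYle : Y ≤ 1 - (T - cbar m) / W := by
    obtain ⟨s', hs', hse⟩ := hreg m.succ
    refine csInf_le ⟨0, ?_⟩ ⟨s', hs', ?_⟩
    · rintro v ⟨t, -, rfl⟩
      exact Finset.sum_nonneg fun j _ => mul_nonneg (hp0 j) (by split_ifs <;> norm_num)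
    · rw [h01, hse]; simp [hp, hc]
  have hXle : X ≤ ∑ j, p j * ℓ s j := by
    refine csInf_le ⟨0, ?_⟩ ⟨s, hs, rfl⟩
    rintro v ⟨t, -, rfl⟩
    exact Finset.sum_nonneg fun j _ => mul_nonneg (hp0 j) (hℓ0 _ _)
  have hXge : (Cstar nE cbar ℓ A S + ((nE : ℝ) - 1) * L) / W ≤ X := by
    refine le_csInf ⟨_, s, hs, rfl⟩ ?_
    rintro v ⟨t, ht, rfl⟩
    rw [hpl]
    have : Cstar nE cbar ℓ A S ≤ Ccond nE cbar ℓ L t := csInf_le hbC ⟨L, hL, t, ht, rfl⟩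
    gcongr
  refine caseII_rpow_aux α β _ W _ ((∑ j, p j * ℓ s j) - X) _ hα0 hα1 hβ ?_ hWpos ?_ ?_ ?_ ?_
  · rw [hD, hDstar]; exact sub_nonneg.2 (hcm _)
  · rw [hW, hT]
    have h1 : L ≤ lbar := (hAsub hL).2
    have h2 : ∑ j, cbar j ≤ ∑ j, C j := Finset.sum_le_sum fun j _ => (hcbar j).2
    exact mul_le_mul_of_nonneg_left (add_le_add h1 h2) (by linarith)
  · linarith
  · rw [hpl]
    have : (Ccond nE cbar ℓ L s - Cstar nE cbar ℓ A S) / W =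
      (Ccond nE cbar ℓ L s + ((nE : ℝ) - 1) * L) / W
        - (Cstar nE cbar ℓ A S + ((nE : ℝ) - 1) * L) / W := by ring
    rw [this]; linarith
  · refine le_trans ?_ key
    rw [h01, hD, hDstar]
    have : (c (sel s) - cbar m) / W = (1 - p (sel s)) - (1 - (T - cbar m) / W) := by
      simp only [hp]; ring
    rw [this]; linarith
end

section
/- (Case III of the proof of Theorem 3.1, conditional form.) Assume S is regular and the pointwise Γ-consistency hypothesis holds with Γ(t) = β·t^α for some α ∈ (0,1] and β > 0. Let L ∈ A and s ∈ S with sel(s) = j₀ for some j₀ ∈ {1,...,n_e}, and assume c̄_0 ≤ c̄_j for all j = 1,...,n_e. Then C(L,s) − C* ≥ β^{−1/α}·(c̄_{j₀} − c̄_0)^{1/α} / (n_e·(l̄ + Σ_{j=1}^{n_e} C_j))^{1/α − 1}, where c̄_{j₀} − c̄_0 = D(L,s) − D*. -/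
open Finset

/-- Case III of the proof of Theorem 3.1, conditional form. -/
theorem caseIII_surrogate_regret_lower_bound (nE : ℕ) (hnE : 1 ≤ nE)
    (sel : (Fin (nE + 1) → ℝ) → Fin (nE + 1))
    (hsel : ∀ (s : Fin (nE + 1) → ℝ) (j : Fin (nE + 1)), s j ≤ s (sel s))
    (S : Set (Fin (nE + 1) → ℝ)) (hS : S.Nonempty)
    (hreg : ∀ j : Fin (nE + 1), ∃ s ∈ S, sel s = j)
    (ℓ : (Fin (nE + 1) → ℝ) → Fin (nE + 1) → ℝ)
    (hℓ0 : ∀ s j, 0 ≤ ℓ s j)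
    (hℓ1 : ∀ s j, j ≠ sel s → 1 ≤ ℓ s j)
    (lbar : ℝ) (hlbar : 0 < lbar)
    (C : Fin nE → ℝ) (hC : ∀ j, 0 < C j)
    (A : Set ℝ) (hA : A.Nonempty) (hAsub : A ⊆ Set.Icc 0 lbar)
    (cbar : Fin nE → ℝ) (hcbar : ∀ j, cbar j ∈ Set.Icc 0 (C j))
    (α β : ℝ) (hα : α ∈ Set.Ioc (0 : ℝ) 1) (hβ : 0 < β)
    (hcons : ∀ p : Fin (nE + 1) → ℝ, (∀ j, 0 ≤ p j) → (∑ j, p j) = 1 → ∀ s ∈ S,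
      (∑ j, p j * (if sel s ≠ j then (1 : ℝ) else 0))
          - sInf {v | ∃ s' ∈ S, v = ∑ j, p j * (if sel s' ≠ j then (1 : ℝ) else 0)}
        ≤ β * ((∑ j, p j * ℓ s j)
          - sInf {v | ∃ s' ∈ S, v = ∑ j, p j * ℓ s' j}) ^ α)
    (L : ℝ) (hL : L ∈ A) (s : Fin (nE + 1) → ℝ) (hs : s ∈ S)
    (j₀ : Fin nE) (hselj : sel s = j₀.succ)
    (hdom : ∀ j, sInf A ≤ cbar j) :
    β ^ (-(1 / α)) * (cbar j₀ - sInf A) ^ (1 / α)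
          / ((nE : ℝ) * (lbar + ∑ j, C j)) ^ (1 / α - 1)
        ≤ Ccond nE cbar ℓ L s - Cstar nE cbar ℓ A S ∧
      cbar j₀ - sInf A = Dcond nE cbar sel L s - Dstar nE cbar A := by
  classical
  obtain ⟨hα0, hα1⟩ := hα
  have hbA : BddBelow A := ⟨0, fun x hx => (hAsub hx).1⟩
  have hc00 : 0 ≤ sInf A := le_csInf hA fun x hx => (hAsub hx).1
  have hc0L : sInf A ≤ L := csInf_le hbA hL
  have hc0l : sInf A ≤ lbar := hc0L.trans (hAsub hL).2
  have hcmem : sInf A ∈ closure A := csInf_mem_closure hA hbA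
  set c0 := sInf A with hc0def
  have hc : ∀ j, 0 ≤ cbar j := fun j => (hcbar j).1
  -- the coefficient of L is nonnegative
  have hcoef : ∀ s', 0 ≤ (∑ j : Fin nE, ℓ s' j.succ) - ((nE : ℝ) - 1) := by
    intro s'
    have h1 : (∑ j : Fin nE, (1 - if sel s' = j.succ then (1 : ℝ) else 0))
        ≤ ∑ j : Fin nE, ℓ s' j.succ := by
      apply Finset.sum_le_sum
      intro j _
      split_ifs with h
      · simpa using hℓ0 s' j.succ
      · simpa using hℓ1 s' j.succ (fun h' => h h'.symm)
    have h2 : (∑ j : Fin nE, if sel s' = j.succ then (1 : ℝ) else 0) ≤ 1 := by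
      rcases Fin.eq_zero_or_eq_succ (sel s') with h | ⟨i, h⟩
      · simp [h, (Fin.succ_ne_zero _).symm]
      · simp [h, Fin.succ_inj]
    rw [Finset.sum_sub_distrib] at h1
    simp only [Finset.sum_const, Finset.card_univ, Fintype.card_fin, nsmul_eq_mul, mul_one] at h1
    linarith
  have haff : ∀ x s', Ccond nE cbar ℓ x s' = ((∑ j, cbar j) * ℓ s' 0
      + ∑ j : Fin nE, (∑ j' ∈ univ.erase j, cbar j') * ℓ s' j.succ)
      + x * ((∑ j : Fin nE, ℓ s' j.succ) - ((nE : ℝ) - 1)) := by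
    intro x s'
    unfold Ccond
    simp only [add_mul, Finset.sum_add_distrib, ← Finset.mul_sum]
    ring
  have herase0 : ∀ j, 0 ≤ ∑ j' ∈ univ.erase j, cbar j' :=
    fun j => Finset.sum_nonneg fun i _ => hc i
  have hsum0 : 0 ≤ ∑ j, cbar j := Finset.sum_nonneg fun i _ => hc i
  have hCpos : ∀ x s', 0 ≤ x → 0 ≤ Ccond nE cbar ℓ x s' := by
    intro x s' hx
    rw [haff]
    have := Finset.sum_nonneg (s := univ) fun (j : Fin nE) _ => mul_nonneg (herase0 j) (hℓ0 s' j.succ)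
    have := mul_nonneg hsum0 (hℓ0 s' 0)
    have := mul_nonneg hx (hcoef s')
    linarith
  have hCs : ∀ x ∈ A, ∀ s' ∈ S, Cstar nE cbar ℓ A S ≤ Ccond nE cbar ℓ x s' := by
    intro x hx s' hs'
    apply csInf_le
    · refine ⟨0, ?_⟩
      rintro _ ⟨y, hy, s'', _, rfl⟩
      exact hCpos y s'' (hAsub hy).1
    · exact ⟨x, hx, s', hs', rfl⟩
  have hCs0 : ∀ s' ∈ S, Cstar nE cbar ℓ A S ≤ Ccond nE cbar ℓ c0 s' := by
    intro s' hs'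
    have hcl : IsClosed {x | Cstar nE cbar ℓ A S ≤ Ccond nE cbar ℓ x s'} := by
      apply isClosed_le continuous_const
      simp only [haff]
      fun_prop
    exact closure_minimal (fun x hx => hCs x hx s' hs') hcl hcmem
  have hCL : Ccond nE cbar ℓ c0 s ≤ Ccond nE cbar ℓ L s := by
    rw [haff, haff L]
    have := mul_le_mul_of_nonneg_right hc0L (hcoef s)
    linarith
  have hD : Dcond nE cbar sel L s = cbar j₀ := by
    unfold Dcond
    simp [hselj, Fin.succ_inj]
  haveI : Nonempty (Fin nE) := ⟨j₀⟩
  have hDs : Dstar nE cbar A = c0 := min_eq_left (le_ciInf hdom)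
  refine ⟨?_, by rw [hD, hDs]⟩
  -- weights
  let w : Fin (nE + 1) → ℝ := Fin.cons (∑ j, cbar j) fun j => c0 + ∑ j' ∈ univ.erase j, cbar j'
  have hw0 : w 0 = ∑ j, cbar j := rfl
  have hws : ∀ j : Fin nE, w j.succ = c0 + ∑ j' ∈ univ.erase j, cbar j' := fun j => rfl
  have hwnn : ∀ j, 0 ≤ w j := by
    intro j
    refine Fin.cases ?_ (fun i => ?_) j
    · rw [hw0]; exact hsum0
    · rw [hws]; exact add_nonneg hc00 (herase0 i)
  have hCw : ∀ s', Ccond nE cbar ℓ c0 s' = (∑ j, w j * ℓ s' j) - ((nE : ℝ) - 1) * c0 := by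
    intro s'
    rw [Fin.sum_univ_succ]
    rfl
  set W : ℝ := nE * (c0 + ∑ j, cbar j) with hW
  have hWsum : ∑ j, w j = W := by
    rw [Fin.sum_univ_succ]
    simp only [hw0, hws, Finset.sum_add_distrib, Finset.sum_erase_eq_sub (Finset.mem_univ _),
      Finset.sum_sub_distrib, Finset.sum_const, Finset.card_univ, Fintype.card_fin, nsmul_eq_mul]
    rw [hW]; ring
  have hwdiff : w 0 - w j₀.succ = cbar j₀ - c0 := by
    rw [hw0, hws, Finset.sum_erase_eq_sub (Finset.mem_univ _)]; ring
  have hnE' : (0 : ℝ) < nE := by exact_mod_cast hnE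
  have hWM : W ≤ nE * (lbar + ∑ j, C j) := by
    apply mul_le_mul_of_nonneg_left _ hnE'.le
    exact add_le_add hc0l (Finset.sum_le_sum fun j _ => (hcbar j).2)
  have hW0 : 0 ≤ W := mul_nonneg hnE'.le (add_nonneg hc00 hsum0)
  have hd0 : 0 ≤ cbar j₀ - c0 := sub_nonneg.2 (hdom j₀)
  have hαi : 0 < 1 / α := by positivity
  have hαi1 : 0 ≤ 1 / α - 1 := by
    rw [sub_nonneg, le_div_iff₀ hα0]; linarith
  rcases hW0.eq_or_lt with hWz | hWpos
  · have hz : c0 + ∑ j, cbar j = 0 := by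
      rcases mul_eq_zero.1 (hWz.symm) with h | h
      · exact absurd h hnE'.ne'
      · exact h
    have hle : cbar j₀ ≤ ∑ j, cbar j :=
      Finset.single_le_sum (fun i _ => hc i) (Finset.mem_univ j₀)
    have hzero : cbar j₀ - c0 = 0 := by linarith
    rw [hzero, Real.zero_rpow hαi.ne', mul_zero, zero_div]
    exact sub_nonneg.2 (hCs L hL s hs)
  have hp0 : ∀ j, 0 ≤ w j / W := fun j => div_nonneg (hwnn j) hW0
  have hp1 : ∑ j, w j / W = 1 := by
    rw [← Finset.sum_div, hWsum, div_self hWpos.ne']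
  have key := hcons (fun j => w j / W) hp0 hp1 s hs
  have hind : ∀ s', (∑ j, w j / W * (if sel s' ≠ j then (1 : ℝ) else 0)) = 1 - w (sel s') / W := by
    intro s'
    have : ∀ j, w j / W * (if sel s' ≠ j then (1 : ℝ) else 0)
        = w j / W - if sel s' = j then w j / W else 0 := by
      intro j
      by_cases h : sel s' = j <;> simp [h]
    simp only [this, Finset.sum_sub_distrib, hp1]
    simp
  have hI1 : sInf {v | ∃ s' ∈ S, v = ∑ j, w j / W * (if sel s' ≠ j then (1 : ℝ) else 0)}
      ≤ 1 - w 0 / W := by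
    obtain ⟨s1, hs1, hsel1⟩ := hreg 0
    apply csInf_le
    · refine ⟨0, ?_⟩
      rintro _ ⟨y, _, rfl⟩
      exact Finset.sum_nonneg fun j _ => mul_nonneg (hp0 j) (by split_ifs <;> norm_num)
    · exact ⟨s1, hs1, by rw [hind, hsel1]⟩
  rw [hind s, hselj] at key
  set I := sInf {v | ∃ s' ∈ S, v = ∑ j, w j / W * ℓ s' j} with hI
  set t := (∑ j, w j / W * ℓ s j) - I with ht
  have hdiv : ∀ s', ∑ j, w j / W * ℓ s' j = (∑ j, w j * ℓ s' j) / W := by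
    intro s'
    rw [Finset.sum_div]
    exact Finset.sum_congr rfl fun j _ => by ring
  have ht0 : 0 ≤ t := by
    rw [ht, sub_nonneg]
    apply csInf_le
    · refine ⟨0, ?_⟩
      rintro _ ⟨y, _, rfl⟩
      exact Finset.sum_nonneg fun j _ => mul_nonneg (hp0 j) (hℓ0 y j)
    · exact ⟨s, hs, rfl⟩
  have hIge : (Cstar nE cbar ℓ A S + ((nE : ℝ) - 1) * c0) / W ≤ I := by
    apply le_csInf
    · exact ⟨_, s, hs, rfl⟩
    · rintro _ ⟨y, hy, rfl⟩
      rw [hdiv]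
      have := hCs0 y hy
      rw [hCw] at this
      exact div_le_div_of_nonneg_right (by linarith) hW0
  have hWt : W * t ≤ Ccond nE cbar ℓ L s - Cstar nE cbar ℓ A S := by
    rw [div_le_iff₀ hWpos] at hIge
    have h1 : W * t = (∑ j, w j * ℓ s j) - I * W := by
      rw [ht, hdiv]; field_simp
    have := hCw s
    linarith
  refine le_trans ?_ hWt
  have hreg2 : (cbar j₀ - c0) / W ≤ β * t ^ α := by
    rw [← hwdiff, sub_div]; linarith
  have hpow : ((cbar j₀ - c0) / W) ^ (1 / α) ≤ β ^ (1 / α) * t := by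
    have := Real.rpow_le_rpow (div_nonneg hd0 hW0) hreg2 hαi.le
    rwa [Real.mul_rpow hβ.le (Real.rpow_nonneg ht0 _), ← Real.rpow_mul ht0,
      mul_one_div_cancel hα0.ne', Real.rpow_one] at this
  rw [Real.div_rpow hd0 hW0] at hpow
  have hWe : W ^ (1 / α) = W ^ (1 / α - 1) * W := by
    rw [Real.rpow_sub_one hWpos.ne']; field_simp
  have hβp : 0 < β ^ (1 / α) := Real.rpow_pos_of_pos hβ _
  have hWp : 0 < W ^ (1 / α - 1) := Real.rpow_pos_of_pos hWpos _
  have hMp : W ^ (1 / α - 1) ≤ ((nE : ℝ) * (lbar + ∑ j, C j)) ^ (1 / α - 1) :=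
    Real.rpow_le_rpow hW0 hWM hαi1
  have hdp : 0 ≤ (cbar j₀ - c0) ^ (1 / α) := Real.rpow_nonneg hd0 _
  rw [Real.rpow_neg hβ.le]
  calc (β ^ (1 / α))⁻¹ * (cbar j₀ - c0) ^ (1 / α) / ((nE : ℝ) * (lbar + ∑ j, C j)) ^ (1 / α - 1)
      ≤ (β ^ (1 / α))⁻¹ * (cbar j₀ - c0) ^ (1 / α) / W ^ (1 / α - 1) :=
        div_le_div_of_nonneg_left (mul_nonneg (inv_nonneg.2 hβp.le) hdp) hWp hMp
    _ ≤ W * t := by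
        rw [div_le_iff₀ (by positivity), hWe] at hpow
        rw [div_le_iff₀ hWp, inv_mul_le_iff₀ hβp]
        linarith
end

section
/- (Theorem 3.1, conditional form.) Assume S is regular and the pointwise Γ-consistency hypothesis holds with Γ(t) = β·t^α for some α ∈ (0,1] and β > 0. Then for every L ∈ A and every s ∈ S, D(L,s) − D* ≤ Γ̄(C(L,s) − C*), where Γ̄(t) = max{ t, (n_e·(l̄ + Σ_{j=1}^{n_e} C_j))^{1−α}·β·t^α }. -/
open Finset

lemma dcond_eq (nE : ℕ) (cbar : Fin nE → ℝ)
    (sel : (Fin (nE + 1) → ℝ) → Fin (nE + 1)) (L : ℝ) (s : Fin (nE + 1) → ℝ) :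
    Dcond nE cbar sel L s = (Fin.cons L cbar : Fin (nE + 1) → ℝ) (sel s) := by
  unfold Dcond
  generalize sel s = i
  refine Fin.cases ?_ (fun j => ?_) i
  · simp [Fin.succ_ne_zero, eq_comm]
  · simp [Fin.succ_inj]

lemma ccond_eq (nE : ℕ) (cbar : Fin nE → ℝ)
    (ℓ : (Fin (nE + 1) → ℝ) → Fin (nE + 1) → ℝ) (L : ℝ) (s : Fin (nE + 1) → ℝ) :
    Ccond nE cbar ℓ L s = ∑ j, ((L + ∑ i, cbar i) - (Fin.cons L cbar : Fin (nE + 1) → ℝ) j) * ℓ s j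
      - ((nE : ℝ) - 1) * L := by
  unfold Ccond
  rw [Fin.sum_univ_succ]
  simp only [Fin.cons_zero, Fin.cons_succ, add_sub_cancel_left]
  congr 2
  refine Finset.sum_congr rfl fun j _ => ?_
  rw [← Finset.sum_erase_add univ cbar (mem_univ j)]
  ring

lemma ccond_sub (nE : ℕ) (cbar : Fin nE → ℝ)
    (ℓ : (Fin (nE + 1) → ℝ) → Fin (nE + 1) → ℝ) (L M : ℝ) (s : Fin (nE + 1) → ℝ) :
    Ccond nE cbar ℓ L s - Ccond nE cbar ℓ M s
      = (L - M) * (∑ j : Fin nE, ℓ s j.succ - ((nE : ℝ) - 1)) := by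
  unfold Ccond
  simp only [add_mul, Finset.sum_add_distrib, ← Finset.mul_sum]
  ring

lemma sum_loss_ge (nE : ℕ) (sel : (Fin (nE + 1) → ℝ) → Fin (nE + 1))
    (ℓ : (Fin (nE + 1) → ℝ) → Fin (nE + 1) → ℝ)
    (hℓ0 : ∀ s j, 0 ≤ ℓ s j) (hℓ1 : ∀ s j, j ≠ sel s → 1 ≤ ℓ s j)
    (s : Fin (nE + 1) → ℝ) : (nE : ℝ) - 1 ≤ ∑ j : Fin nE, ℓ s j.succ := by
  have h1 : ∑ j : Fin nE, ((1 : ℝ) - if sel s = j.succ then 1 else 0) ≤ ∑ j : Fin nE, ℓ s j.succ := by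
    refine Finset.sum_le_sum fun j _ => ?_
    split_ifs with h
    · simpa using hℓ0 s j.succ
    · simpa using hℓ1 s j.succ (Ne.symm h)
  have h2 : ∑ j : Fin nE, (if sel s = j.succ then (1 : ℝ) else 0) ≤ 1 := by
    generalize sel s = i
    refine Fin.cases ?_ (fun j => ?_) i
    · simp [eq_comm, Fin.succ_ne_zero]
    · simp [Fin.succ_inj]
  rw [Finset.sum_sub_distrib] at h1
  have h3 : ∑ j : Fin nE, (1 : ℝ) = nE := by simp
  linarith

lemma sum_loss_ge_zero (nE : ℕ) (sel : (Fin (nE + 1) → ℝ) → Fin (nE + 1))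
    (ℓ : (Fin (nE + 1) → ℝ) → Fin (nE + 1) → ℝ)
    (hℓ1 : ∀ s j, j ≠ sel s → 1 ≤ ℓ s j)
    (s : Fin (nE + 1) → ℝ) (h0 : sel s = 0) : (nE : ℝ) ≤ ∑ j : Fin nE, ℓ s j.succ := by
  have h1 : ∑ j : Fin nE, (1 : ℝ) ≤ ∑ j : Fin nE, ℓ s j.succ :=
    Finset.sum_le_sum fun j _ => hℓ1 s j.succ (by rw [h0]; exact Fin.succ_ne_zero j)
  simpa using h1

lemma key_bound (nE : ℕ) (hnE : 1 ≤ nE)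
    (sel : (Fin (nE + 1) → ℝ) → Fin (nE + 1))
    (S : Set (Fin (nE + 1) → ℝ))
    (hreg : ∀ j : Fin (nE + 1), ∃ s ∈ S, sel s = j)
    (ℓ : (Fin (nE + 1) → ℝ) → Fin (nE + 1) → ℝ)
    (hℓ0 : ∀ s j, 0 ≤ ℓ s j)
    (lbar : ℝ)
    (C : Fin nE → ℝ)
    (cbar : Fin nE → ℝ) (hcbar : ∀ j, cbar j ∈ Set.Icc 0 (C j))
    (α β : ℝ) (hα : α ∈ Set.Ioc (0 : ℝ) 1) (hβ : 0 < β)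
    (hcons : ∀ p : Fin (nE + 1) → ℝ, (∀ j, 0 ≤ p j) → (∑ j, p j) = 1 → ∀ s ∈ S,
      (∑ j, p j * (if sel s ≠ j then (1 : ℝ) else 0))
          - sInf {v | ∃ s' ∈ S, v = ∑ j, p j * (if sel s' ≠ j then (1 : ℝ) else 0)}
        ≤ β * ((∑ j, p j * ℓ s j)
          - sInf {v | ∃ s' ∈ S, v = ∑ j, p j * ℓ s' j}) ^ α)
    (M : ℝ) (hM : M ∈ Set.Icc 0 lbar) (s : Fin (nE + 1) → ℝ) (hs : s ∈ S) (i : Fin (nE + 1))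
    (t : ℝ) (ht : ∀ s' ∈ S, Ccond nE cbar ℓ M s - Ccond nE cbar ℓ M s' ≤ t) :
    (Fin.cons M cbar : Fin (nE + 1) → ℝ) (sel s) - (Fin.cons M cbar : Fin (nE + 1) → ℝ) i
      ≤ ((nE : ℝ) * (lbar + ∑ j, C j)) ^ (1 - α) * β * t ^ α := by
  have ht0 : 0 ≤ t := by simpa using ht s hs
  simp only [ccond_eq] at ht
  set c : Fin (nE + 1) → ℝ := Fin.cons M cbar with hc
  set T : ℝ := M + ∑ i, cbar i with hT
  have hcT : ∑ j, c j = T := by rw [Fin.sum_univ_succ]; simp [hc, hT]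
  have hc0 : ∀ j, 0 ≤ c j := by
    intro j
    refine Fin.cases ?_ (fun j => ?_) j
    · simpa [hc] using hM.1
    · simpa [hc] using (hcbar j).1
  have hcle : ∀ j, c j ≤ T := fun j => by
    rw [← hcT]; exact Finset.single_le_sum (fun j _ => hc0 j) (mem_univ j)
  have hT0 : 0 ≤ T := (hc0 0).trans (hcle 0)
  have hTle : T ≤ lbar + ∑ j, C j :=
    add_le_add hM.2 (Finset.sum_le_sum fun j _ => (hcbar j).2)
  have hn : (1 : ℝ) ≤ nE := by exact_mod_cast hnE
  have hK : (0 : ℝ) ≤ (nE : ℝ) * (lbar + ∑ j, C j) := mul_nonneg (by linarith) (by linarith)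
  rcases hT0.eq_or_lt with hT0 | hT0
  · have h1 := hcle (sel s)
    have h2 := hc0 i
    have : 0 ≤ ((nE : ℝ) * (lbar + ∑ j, C j)) ^ (1 - α) * β * t ^ α := by positivity
    linarith
  set W : ℝ := nE * T with hW
  have hW0 : 0 < W := by positivity
  have hsum : ∑ j, (T - c j) = W := by
    rw [Finset.sum_sub_distrib, hcT]; simp [hW]; ring
  have h01 : ∀ s', ∑ j, (T - c j) / W * (if sel s' ≠ j then (1 : ℝ) else 0)
      = (W - T + c (sel s')) / W := by
    intro s'
    have : ∀ j, (T - c j) / W * (if sel s' ≠ j then (1 : ℝ) else 0)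
      = (T - c j) / W - (if sel s' = j then (T - c j) / W else 0) := by
      intro j; by_cases h : sel s' = j <;> simp [h]
    simp only [this]
    rw [Finset.sum_sub_distrib, ← Finset.sum_div, hsum]
    simp
    ring
  have hl : ∀ s', ∑ j, (T - c j) / W * ℓ s' j = (∑ j, (T - c j) * ℓ s' j) / W := by
    intro s'
    rw [Finset.sum_div]
    exact Finset.sum_congr rfl fun j _ => by ring
  have h := hcons (fun j => (T - c j) / W)
    (fun j => div_nonneg (sub_nonneg.2 (hcle j)) hW0.le)
    (by rw [← Finset.sum_div, hsum, div_self hW0.ne']) s hs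
  simp only [h01, hl] at h
  have hlow : sInf {v | ∃ s' ∈ S, v = (W - T + c (sel s')) / W} ≤ (W - T + c i) / W := by
    obtain ⟨s', hs', rfl⟩ := hreg i
    refine csInf_le ⟨(W - T) / W, ?_⟩ ⟨s', hs', rfl⟩
    rintro v ⟨s'', _, rfl⟩
    have := hc0 (sel s'')
    gcongr
    linarith
  have hup : (∑ j, (T - c j) * ℓ s j) / W - t / W
      ≤ sInf {v | ∃ s' ∈ S, v = (∑ j, (T - c j) * ℓ s' j) / W} := by
    refine le_csInf ⟨_, s, hs, rfl⟩ ?_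
    rintro v ⟨s', hs', rfl⟩
    rw [← sub_div]
    gcongr
    linarith [ht s' hs']
  have hself : sInf {v | ∃ s' ∈ S, v = (∑ j, (T - c j) * ℓ s' j) / W}
      ≤ (∑ j, (T - c j) * ℓ s j) / W := by
    refine csInf_le ⟨0, ?_⟩ ⟨s, hs, rfl⟩
    rintro v ⟨s', _, rfl⟩
    exact div_nonneg (Finset.sum_nonneg fun j _ =>
      mul_nonneg (sub_nonneg.2 (hcle j)) (hℓ0 s' j)) hW0.le
  have hpow := Real.rpow_le_rpow (sub_nonneg.2 hself)
    (show _ ≤ t / W by linarith) hα.1.le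
  have h2 : (c (sel s) - c i) / W ≤ β * (t / W) ^ α := by
    have h3 := mul_le_mul_of_nonneg_left hpow hβ.le
    have : (c (sel s) - c i) / W = (W - T + c (sel s)) / W - (W - T + c i) / W := by ring
    linarith
  rw [div_le_iff₀ hW0] at h2
  refine h2.trans ?_
  have h4 : β * (t / W) ^ α * W = W ^ (1 - α) * β * t ^ α := by
    rw [Real.div_rpow ht0 hW0.le, Real.rpow_sub hW0, Real.rpow_one]
    ring
  rw [h4]
  have h5 : W ^ (1 - α) ≤ ((nE : ℝ) * (lbar + ∑ j, C j)) ^ (1 - α) :=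
    Real.rpow_le_rpow hW0.le (by rw [hW]; gcongr) (by linarith [hα.2])
  gcongr

/-- Theorem 3.1, conditional form. -/
theorem single_stage_consistency_bound_conditional (nE : ℕ) (hnE : 1 ≤ nE)
    (sel : (Fin (nE + 1) → ℝ) → Fin (nE + 1))
    (hsel : ∀ (s : Fin (nE + 1) → ℝ) (j : Fin (nE + 1)), s j ≤ s (sel s))
    (S : Set (Fin (nE + 1) → ℝ)) (hS : S.Nonempty)
    (hreg : ∀ j : Fin (nE + 1), ∃ s ∈ S, sel s = j)
    (ℓ : (Fin (nE + 1) → ℝ) → Fin (nE + 1) → ℝ)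
    (hℓ0 : ∀ s j, 0 ≤ ℓ s j)
    (hℓ1 : ∀ s j, j ≠ sel s → 1 ≤ ℓ s j)
    (lbar : ℝ) (hlbar : 0 < lbar)
    (C : Fin nE → ℝ) (hC : ∀ j, 0 < C j)
    (A : Set ℝ) (hA : A.Nonempty) (hAsub : A ⊆ Set.Icc 0 lbar)
    (cbar : Fin nE → ℝ) (hcbar : ∀ j, cbar j ∈ Set.Icc 0 (C j))
    (α β : ℝ) (hα : α ∈ Set.Ioc (0 : ℝ) 1) (hβ : 0 < β)
    (hcons : ∀ p : Fin (nE + 1) → ℝ, (∀ j, 0 ≤ p j) → (∑ j, p j) = 1 → ∀ s ∈ S,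
      (∑ j, p j * (if sel s ≠ j then (1 : ℝ) else 0))
          - sInf {v | ∃ s' ∈ S, v = ∑ j, p j * (if sel s' ≠ j then (1 : ℝ) else 0)}
        ≤ β * ((∑ j, p j * ℓ s j)
          - sInf {v | ∃ s' ∈ S, v = ∑ j, p j * ℓ s' j}) ^ α)
    (L : ℝ) (hL : L ∈ A) (s : Fin (nE + 1) → ℝ) (hs : s ∈ S) :
    Dcond nE cbar sel L s - Dstar nE cbar A ≤
      max (Ccond nE cbar ℓ L s - Cstar nE cbar ℓ A S)
        (((nE : ℝ) * (lbar + ∑ j, C j)) ^ (1 - α) * β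
          * (Ccond nE cbar ℓ L s - Cstar nE cbar ℓ A S) ^ α) := by
  have : Nonempty (Fin nE) := ⟨⟨0, hnE⟩⟩
  have hbA : BddBelow A := ⟨0, fun x hx => (hAsub hx).1⟩
  set m := sInf A with hm
  have hm0 : 0 ≤ m := le_csInf hA fun x hx => (hAsub hx).1
  have hmL : m ≤ L := csInf_le hbA hL
  have hml : m ≤ lbar := hmL.trans (hAsub hL).2
  have hk := sum_loss_ge nE sel ℓ hℓ0 hℓ1
  have hCnn : ∀ M, 0 ≤ M → ∀ s', 0 ≤ Ccond nE cbar ℓ M s' := by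
    intro M hM s'
    have h1 := ccond_sub nE cbar ℓ M 0 s'
    have h2 : 0 ≤ Ccond nE cbar ℓ 0 s' := by
      unfold Ccond
      have hc : ∀ j, 0 ≤ cbar j := fun j => (hcbar j).1
      have h3 : 0 ≤ (∑ j, cbar j) * ℓ s' 0 :=
        mul_nonneg (Finset.sum_nonneg fun j _ => hc j) (hℓ0 _ _)
      have h4 : 0 ≤ ∑ j : Fin nE, (0 + ∑ j' ∈ univ.erase j, cbar j') * ℓ s' j.succ :=
        Finset.sum_nonneg fun j _ => mul_nonneg
          (by rw [zero_add]; exact Finset.sum_nonneg fun j _ => hc j) (hℓ0 _ _)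
      linarith
    have h5 := mul_nonneg hM (sub_nonneg.2 (hk s'))
    rw [sub_zero] at h1
    linarith
  have hCs : ∀ L' ∈ A, ∀ s' ∈ S, Cstar nE cbar ℓ A S ≤ Ccond nE cbar ℓ L' s' := by
    intro L' hL' s' hs'
    refine csInf_le ⟨0, ?_⟩ ⟨L', hL', s', hs', rfl⟩
    rintro v ⟨L'', hL'', s'', _, rfl⟩
    exact hCnn _ (hAsub hL'').1 _
  have hCm : ∀ s' ∈ S, Cstar nE cbar ℓ A S ≤ Ccond nE cbar ℓ m s' := by
    intro s' hs'
    by_contra! hlt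
    set k := ∑ j : Fin nE, ℓ s' j.succ - ((nE : ℝ) - 1) with hkdef
    have hk0 : 0 ≤ k := sub_nonneg.2 (hk s')
    set d := Cstar nE cbar ℓ A S - Ccond nE cbar ℓ m s' with hd
    have hd0 : 0 < d := sub_pos.2 hlt
    obtain ⟨L', hL', hlt'⟩ := exists_lt_of_csInf_lt hA
      (show sInf A < m + d / (k + 1) by rw [← hm]; linarith [div_pos hd0 (by linarith : 0 < k + 1)])
    have h1 := hCs L' hL' s' hs'
    have h2 := ccond_sub nE cbar ℓ L' m s'
    rw [← hkdef] at h2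
    have h3 : (L' - m) * (k + 1) < d := by
      rw [← lt_div_iff₀ (by linarith)]; linarith
    have h4 : m ≤ L' := csInf_le hbA hL'
    nlinarith
  have key := key_bound nE hnE sel S hreg ℓ hℓ0 lbar C cbar hcbar α β hα hβ hcons
  rw [dcond_eq]
  unfold Dstar
  rw [← hm]
  obtain ⟨j0, hj0⟩ := exists_eq_ciInf_of_finite (f := cbar)
  rcases le_total (⨅ j, cbar j) m with hle | hle
  · rw [min_eq_right hle, ← hj0]
    refine le_max_of_le_right ?_
    have := key L (hAsub hL) s hs j0.succ (Ccond nE cbar ℓ L s - Cstar nE cbar ℓ A S)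
      (fun s' hs' => by linarith [hCs L hL s' hs'])
    simpa using this
  · rw [min_eq_left hle]
    have hsub := ccond_sub nE cbar ℓ L m s
    by_cases h0 : sel s = 0
    · refine le_max_of_le_left ?_
      rw [h0, Fin.cons_zero]
      have h1 := sum_loss_ge_zero nE sel ℓ hℓ1 s h0
      have h2 := hCm s hs
      nlinarith
    · refine le_max_of_le_right ?_
      obtain ⟨j, hj⟩ := Fin.exists_succ_eq.2 h0
      have hmono : 0 ≤ (L - m) * (∑ j : Fin nE, ℓ s j.succ - ((nE : ℝ) - 1)) :=
        mul_nonneg (sub_nonneg.2 hmL) (sub_nonneg.2 (hk s))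
      have := key m ⟨hm0, hml⟩ s hs 0 (Ccond nE cbar ℓ L s - Cstar nE cbar ℓ A S)
        (fun s' hs' => by linarith [hCm s' hs'])
      rw [← hj] at this ⊢
      simpa using this
end

section
/- (Theorem 4.1, conditional form, fixed predictor.) Assume S is regular and the pointwise Γ-consistency hypothesis holds with Γ(t) = β·t^α for some α ∈ (0,1] and β > 0. Fix L ∈ [0,l̄] (the conditional error of the fixed predictor h), and define D^h(s) = L·1_{sel(s)=0} + Σ_{j=1}^{n_e} c̄_j·1_{sel(s)=j}, D^h* = min{L, c̄_1, ..., c̄_{n_e}}, C^h(s) = (Σ_{j=1}^{n_e} c̄_j)·ℓ(s,0) + Σ_{j=1}^{n_e} (L + Σ_{j'≠j} c̄_{j'})·ℓ(s,j), and C^h* = inf_{s'∈S} C^h(s'). Then for every s ∈ S, D^h(s) − D^h* ≤ (n_e·(l̄ + Σ_{j=1}^{n_e} C_j))^{1−α}·β·(C^h(s) − C^h*)^α. -/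
open Finset

/-- Conditional deferral error `D^h(s)` for a fixed conditional predictor error `L`. -/
noncomputable def DcondH (nE : ℕ) (cbar : Fin nE → ℝ)
    (sel : (Fin (nE + 1) → ℝ) → Fin (nE + 1)) (L : ℝ) (s : Fin (nE + 1) → ℝ) : ℝ :=
  (if sel s = 0 then L else 0) + ∑ j : Fin nE, if sel s = j.succ then cbar j else 0

/-- Conditional two-stage surrogate error `C^h(s)` for a fixed conditional predictor
error `L`. -/
noncomputable def CcondH (nE : ℕ) (cbar : Fin nE → ℝ)
    (ℓ : (Fin (nE + 1) → ℝ) → Fin (nE + 1) → ℝ) (L : ℝ) (s : Fin (nE + 1) → ℝ) : ℝ :=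
  (∑ j, cbar j) * ℓ s 0
    + ∑ j : Fin nE, (L + ∑ j' ∈ univ.erase j, cbar j') * ℓ s j.succ

/-- Theorem 4.1, conditional form, fixed predictor. -/
theorem two_stage_consistency_bound_conditional (nE : ℕ) (hnE : 1 ≤ nE)
    (sel : (Fin (nE + 1) → ℝ) → Fin (nE + 1))
    (hsel : ∀ (s : Fin (nE + 1) → ℝ) (j : Fin (nE + 1)), s j ≤ s (sel s))
    (S : Set (Fin (nE + 1) → ℝ)) (hS : S.Nonempty)
    (hreg : ∀ j : Fin (nE + 1), ∃ s ∈ S, sel s = j)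
    (ℓ : (Fin (nE + 1) → ℝ) → Fin (nE + 1) → ℝ)
    (hℓ0 : ∀ s j, 0 ≤ ℓ s j)
    (hℓ1 : ∀ s j, j ≠ sel s → 1 ≤ ℓ s j)
    (lbar : ℝ) (hlbar : 0 < lbar)
    (C : Fin nE → ℝ) (hC : ∀ j, 0 < C j)
    (cbar : Fin nE → ℝ) (hcbar : ∀ j, cbar j ∈ Set.Icc 0 (C j))
    (α β : ℝ) (hα : α ∈ Set.Ioc (0 : ℝ) 1) (hβ : 0 < β)
    (hcons : ∀ p : Fin (nE + 1) → ℝ, (∀ j, 0 ≤ p j) → (∑ j, p j) = 1 → ∀ s ∈ S,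
      (∑ j, p j * (if sel s ≠ j then (1 : ℝ) else 0))
          - sInf {v | ∃ s' ∈ S, v = ∑ j, p j * (if sel s' ≠ j then (1 : ℝ) else 0)}
        ≤ β * ((∑ j, p j * ℓ s j)
          - sInf {v | ∃ s' ∈ S, v = ∑ j, p j * ℓ s' j}) ^ α)
    (L : ℝ) (hL : L ∈ Set.Icc 0 lbar)
    (s : Fin (nE + 1) → ℝ) (hs : s ∈ S) :
    DcondH nE cbar sel L s - min L (⨅ j, cbar j) ≤
      ((nE : ℝ) * (lbar + ∑ j, C j)) ^ (1 - α) * β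
        * (CcondH nE cbar ℓ L s - sInf {v | ∃ s' ∈ S, v = CcondH nE cbar ℓ L s'}) ^ α := by
  obtain ⟨hα0, hα1⟩ := hα
  obtain ⟨hL0, hL1⟩ := hL
  haveI : Nonempty (Fin nE) := ⟨⟨0, hnE⟩⟩
  set c : Fin (nE + 1) → ℝ := Fin.cons L cbar with hc
  have hc0 : ∀ j, 0 ≤ c j := by
    intro j
    refine Fin.cases ?_ (fun i => ?_) j
    · simpa [hc] using hL0
    · simpa [hc] using (hcbar i).1
  set T : ℝ := ∑ j, c j with hT
  have hTeq : T = L + ∑ j, cbar j := by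
    simp [hT, hc, Fin.sum_univ_succ]
  have hT0 : 0 ≤ T := Finset.sum_nonneg fun j _ => hc0 j
  have hcT : ∀ j, c j ≤ T := fun j =>
    Finset.single_le_sum (f := c) (fun i _ => hc0 i) (Finset.mem_univ j)
  have hD : ∀ s, DcondH nE cbar sel L s = c (sel s) := by
    intro s
    unfold DcondH
    have h1 : c (sel s) = ∑ j, if sel s = j then c j else 0 := by simp
    rw [h1, Fin.sum_univ_succ]
    simp [hc]
  have hCc : ∀ s, CcondH nE cbar ℓ L s = ∑ j, (T - c j) * ℓ s j := by
    intro s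
    unfold CcondH
    rw [Fin.sum_univ_succ]
    congr 1
    · simp [hc, hTeq]
    · refine Finset.sum_congr rfl fun j _ => ?_
      congr 1
      rw [hTeq, ← Finset.add_sum_erase _ _ (Finset.mem_univ j)]
      simp [hc]
      ring
  obtain ⟨j0, hj0⟩ : ∃ j0, c j0 = min L (⨅ j, cbar j) := by
    rcases min_choice L (⨅ j, cbar j) with h | h
    · exact ⟨0, by rw [h]; simp [hc]⟩
    · obtain ⟨i, hi⟩ := exists_eq_ciInf_of_finite (f := cbar)
      exact ⟨i.succ, by rw [h, ← hi]; simp [hc]⟩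
  have hnonneg : 0 ≤ CcondH nE cbar ℓ L s - sInf {v | ∃ s' ∈ S, v = CcondH nE cbar ℓ L s'} := by
    rw [sub_nonneg]
    refine csInf_le ⟨0, ?_⟩ ⟨s, hs, rfl⟩
    rintro v ⟨s', _, rfl⟩
    rw [hCc]
    exact Finset.sum_nonneg fun j _ => mul_nonneg (sub_nonneg.2 (hcT j)) (hℓ0 _ _)
  have hCsum : 0 ≤ ∑ j, C j := Finset.sum_nonneg fun j _ => (hC j).le
  have hnE' : (0 : ℝ) < nE := by exact_mod_cast hnE
  rw [hD, ← hj0]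
  rcases hT0.eq_or_lt with h0 | hTpos
  · have h1 : c (sel s) - c j0 ≤ 0 := by
      have := hcT (sel s)
      have := hc0 j0
      linarith
    refine h1.trans ?_
    positivity
  set W : ℝ := nE * T with hW
  have hWpos : 0 < W := by positivity
  have hWsum : ∑ j, (T - c j) = W := by
    rw [Finset.sum_sub_distrib, ← hT]
    simp [hW]
    ring
  set p : Fin (nE + 1) → ℝ := fun j => W⁻¹ * (T - c j) with hp
  have hp0 : ∀ j, 0 ≤ p j := fun j =>
    mul_nonneg (inv_nonneg.2 hWpos.le) (sub_nonneg.2 (hcT j))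
  have hp1 : ∑ j, p j = 1 := by
    rw [hp, ← Finset.mul_sum, hWsum]
    exact inv_mul_cancel₀ hWpos.ne'
  have h01 : ∀ s', (∑ j, p j * (if sel s' ≠ j then (1 : ℝ) else 0)) = 1 - p (sel s') := by
    intro s'
    have : ∀ j, p j * (if sel s' ≠ j then (1 : ℝ) else 0)
        = p j - (if sel s' = j then p j else 0) := by
      intro j
      by_cases h : sel s' = j <;> simp [h]
    simp only [this, Finset.sum_sub_distrib, hp1]
    simp
  have hpl : ∀ s', ∑ j, p j * ℓ s' j = W⁻¹ * CcondH nE cbar ℓ L s' := by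
    intro s'
    rw [hCc, Finset.mul_sum]
    exact Finset.sum_congr rfl fun j _ => by rw [hp]; ring
  have hinf : sInf {v | ∃ s' ∈ S, v = ∑ j, p j * ℓ s' j}
      = W⁻¹ * sInf {v | ∃ s' ∈ S, v = CcondH nE cbar ℓ L s'} := by
    rw [← smul_eq_mul, ← Real.sInf_smul_of_nonneg (inv_nonneg.2 hWpos.le)]
    congr 1
    ext v
    simp only [hpl, Set.mem_setOf_eq, Set.mem_smul_set, smul_eq_mul]
    constructor
    · rintro ⟨s', h, rfl⟩
      exact ⟨_, ⟨s', h, rfl⟩, rfl⟩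
    · rintro ⟨_, ⟨s', h, rfl⟩, rfl⟩
      exact ⟨s', h, rfl⟩
  have key := hcons p hp0 hp1 s hs
  obtain ⟨s0, hs0, hsel0⟩ := hreg j0
  have hle : sInf {v | ∃ s' ∈ S, v = ∑ j, p j * (if sel s' ≠ j then (1 : ℝ) else 0)}
      ≤ 1 - p j0 := by
    refine csInf_le ⟨0, ?_⟩ ⟨s0, hs0, by rw [h01, hsel0]⟩
    rintro v ⟨s', _, rfl⟩
    refine Finset.sum_nonneg fun j _ => mul_nonneg (hp0 j) ?_
    split_ifs <;> norm_num
  rw [h01, hinf, hpl, ← mul_sub] at key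
  set X := CcondH nE cbar ℓ L s - sInf {v | ∃ s' ∈ S, v = CcondH nE cbar ℓ L s'} with hX
  have h2 : W⁻¹ * (c (sel s) - c j0) ≤ β * (W⁻¹ * X) ^ α := by
    refine le_trans ?_ key
    have : W⁻¹ * (c (sel s) - c j0) = (1 - p (sel s)) - (1 - p j0) := by
      simp only [hp]; ring
    rw [this]
    linarith
  have h3 : c (sel s) - c j0 ≤ W * (β * (W⁻¹ * X) ^ α) := by
    rwa [inv_mul_le_iff₀ hWpos] at h2
  have h4 : W * (β * (W⁻¹ * X) ^ α) = W ^ (1 - α) * β * X ^ α := by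
    rw [Real.mul_rpow (inv_nonneg.2 hWpos.le) hnonneg, Real.inv_rpow hWpos.le,
      Real.rpow_sub hWpos, Real.rpow_one]
    ring
  rw [h4] at h3
  refine h3.trans ?_
  have h5 : W ≤ nE * (lbar + ∑ j, C j) := by
    rw [hW, hTeq]
    refine mul_le_mul_of_nonneg_left ?_ hnE'.le
    exact add_le_add hL1 (Finset.sum_le_sum fun j _ => (hcbar j).2)
  have h6 : W ^ (1 - α) ≤ ((nE : ℝ) * (lbar + ∑ j, C j)) ^ (1 - α) :=
    Real.rpow_le_rpow hWpos.le h5 (by linarith)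
  have h7 : 0 ≤ X ^ α := Real.rpow_nonneg hnonneg _
  gcongr
end

section
/- (Theorem 4.3, conditional form of the two-stage guarantee.) Assume S is regular and the pointwise Γ-consistency hypothesis holds with Γ(t) = β·t^α for some α ∈ (0,1] and β > 0. For L ∈ A and s ∈ S set C^h_L(s) = (Σ_{j=1}^{n_e} c̄_j)·ℓ(s,0) + Σ_{j=1}^{n_e} (L + Σ_{j'≠j} c̄_{j'})·ℓ(s,j). Then for every L ∈ A and every s ∈ S, D(L,s) − D* ≤ (L − c̄_0) + (n_e·(l̄ + Σ_{j=1}^{n_e} C_j))^{1−α}·β·(C^h_L(s) − inf_{s'∈S} C^h_L(s'))^α. -/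
open Finset

/-- Conditional two-stage surrogate error `C^h_L(s)` (no `−(n_e−1)L` term). -/
noncomputable def CcondTS (nE : ℕ) (cbar : Fin nE → ℝ)
    (ℓ : (Fin (nE + 1) → ℝ) → Fin (nE + 1) → ℝ) (L : ℝ) (s : Fin (nE + 1) → ℝ) : ℝ :=
  (∑ j, cbar j) * ℓ s 0
    + ∑ j : Fin nE, (L + ∑ j' ∈ univ.erase j, cbar j') * ℓ s j.succ

/-- Theorem 4.3, conditional form of the two-stage guarantee. -/
theorem two_stage_full_consistency_bound_conditional (nE : ℕ) (hnE : 1 ≤ nE)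
    (sel : (Fin (nE + 1) → ℝ) → Fin (nE + 1))
    (hsel : ∀ (s : Fin (nE + 1) → ℝ) (j : Fin (nE + 1)), s j ≤ s (sel s))
    (S : Set (Fin (nE + 1) → ℝ)) (hS : S.Nonempty)
    (hreg : ∀ j : Fin (nE + 1), ∃ s ∈ S, sel s = j)
    (ℓ : (Fin (nE + 1) → ℝ) → Fin (nE + 1) → ℝ)
    (hℓ0 : ∀ s j, 0 ≤ ℓ s j)
    (hℓ1 : ∀ s j, j ≠ sel s → 1 ≤ ℓ s j)
    (lbar : ℝ) (hlbar : 0 < lbar)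
    (C : Fin nE → ℝ) (hC : ∀ j, 0 < C j)
    (A : Set ℝ) (hA : A.Nonempty) (hAsub : A ⊆ Set.Icc 0 lbar)
    (cbar : Fin nE → ℝ) (hcbar : ∀ j, cbar j ∈ Set.Icc 0 (C j))
    (α β : ℝ) (hα : α ∈ Set.Ioc (0 : ℝ) 1) (hβ : 0 < β)
    (hcons : ∀ p : Fin (nE + 1) → ℝ, (∀ j, 0 ≤ p j) → (∑ j, p j) = 1 → ∀ s ∈ S,
      (∑ j, p j * (if sel s ≠ j then (1 : ℝ) else 0))
          - sInf {v | ∃ s' ∈ S, v = ∑ j, p j * (if sel s' ≠ j then (1 : ℝ) else 0)}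
        ≤ β * ((∑ j, p j * ℓ s j)
          - sInf {v | ∃ s' ∈ S, v = ∑ j, p j * ℓ s' j}) ^ α)
    (L : ℝ) (hL : L ∈ A) (s : Fin (nE + 1) → ℝ) (hs : s ∈ S) :
    Dcond nE cbar sel L s - Dstar nE cbar A ≤
      (L - sInf A)
        + ((nE : ℝ) * (lbar + ∑ j, C j)) ^ (1 - α) * β
          * (CcondTS nE cbar ℓ L s
              - sInf {v | ∃ s' ∈ S, v = CcondTS nE cbar ℓ L s'}) ^ α := by
  have hLI := hAsub hL
  have hL0 : 0 ≤ L := hLI.1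
  have hc0 : ∀ j, 0 ≤ cbar j := fun j => (hcbar j).1
  set c : Fin (nE + 1) → ℝ := Fin.cons L cbar with hc
  have hcz : c 0 = L := rfl
  have hcs : ∀ j : Fin nE, c j.succ = cbar j := fun j => rfl
  have hcn : ∀ j, 0 ≤ c j := by
    intro j
    refine Fin.cases ?_ ?_ j
    · exact hL0
    · exact hc0
  set T : ℝ := L + ∑ j, cbar j with hT
  have hcT : ∑ j, c j = T := by rw [Fin.sum_univ_succ]; rfl
  have hcle : ∀ j, c j ≤ T := by
    intro j
    rw [← hcT]
    exact Finset.single_le_sum (fun i _ => hcn i) (Finset.mem_univ j)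
  have hT0 : 0 ≤ T := (hcn 0).trans (hcle 0)
  have hn : (1 : ℝ) ≤ nE := by exact_mod_cast hnE
  set W : ℝ := nE * T with hW
  have hW0 : 0 ≤ W := by positivity
  set M : ℝ := (nE : ℝ) * (lbar + ∑ j, C j) with hM
  have hWM : W ≤ M := by
    have : ∑ j, cbar j ≤ ∑ j, C j := Finset.sum_le_sum (fun j _ => (hcbar j).2)
    have h2 := hLI.2
    apply mul_le_mul_of_nonneg_left _ (by positivity)
    linarith
  have hwsum : ∑ j, (T - c j) = W := by
    rw [Finset.sum_sub_distrib, hcT]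
    simp [hW]
    ring
  have hTS : ∀ s', CcondTS nE cbar ℓ L s' = ∑ j, (T - c j) * ℓ s' j := by
    intro s'
    unfold CcondTS
    rw [Fin.sum_univ_succ, hcz]
    congr 1
    · congr 1
      rw [hT]; ring
    · refine Finset.sum_congr rfl fun j _ => ?_
      congr 1
      rw [hcs, hT, ← Finset.add_sum_erase _ _ (Finset.mem_univ j)]
      ring
  have hTSn : ∀ s', 0 ≤ CcondTS nE cbar ℓ L s' := by
    intro s'
    rw [hTS]
    exact Finset.sum_nonneg fun j _ => mul_nonneg (sub_nonneg.2 (hcle j)) (hℓ0 _ _)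
  set I : ℝ := sInf {v | ∃ s' ∈ S, v = CcondTS nE cbar ℓ L s'} with hI
  have hIle : ∀ s' ∈ S, I ≤ CcondTS nE cbar ℓ L s' := by
    intro s' hs'
    refine csInf_le ⟨0, ?_⟩ ⟨s', hs', rfl⟩
    rintro _ ⟨s'', _, rfl⟩
    exact hTSn s''
  set X : ℝ := CcondTS nE cbar ℓ L s - I with hX
  have hX0 : 0 ≤ X := sub_nonneg.2 (hIle s hs)
  have hα1 : 0 ≤ 1 - α := sub_nonneg.2 hα.2
  have hM0 : 0 ≤ M := hW0.trans hWM
  have key : ∀ k, c (sel s) - c k ≤ M ^ (1 - α) * β * X ^ α := by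
    intro k
    rcases hT0.eq_or_lt with h0 | hpos
    · have h1 := hcle (sel s)
      have h2 := hcn k
      have : 0 ≤ M ^ (1 - α) * β * X ^ α := by positivity
      linarith
    have hWp : 0 < W := by positivity
    have hp1 : ∑ j, (T - c j) / W = 1 := by
      rw [← Finset.sum_div, hwsum, div_self hWp.ne']
    have hind : ∀ s', ∑ j, (T - c j) / W * (if sel s' ≠ j then (1 : ℝ) else 0)
        = 1 - (T - c (sel s')) / W := by
      intro s'
      rw [← hp1, eq_sub_iff_add_eq]
      have : (T - c (sel s')) / W
          = ∑ j, (T - c j) / W * (if sel s' = j then (1 : ℝ) else 0) := by simp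
      rw [this, ← Finset.sum_add_distrib]
      refine Finset.sum_congr rfl fun j _ => ?_
      by_cases h : sel s' = j <;> simp [h, hp1]
    have hpn : ∀ j, 0 ≤ (T - c j) / W := fun j => div_nonneg (sub_nonneg.2 (hcle j)) hW0
    have h := hcons (fun j => (T - c j) / W) hpn hp1 s hs
    simp only [hind] at h
    have hpl : ∀ s', ∑ j, (T - c j) / W * ℓ s' j = CcondTS nE cbar ℓ L s' / W := by
      intro s'
      rw [hTS, Finset.sum_div]
      exact Finset.sum_congr rfl fun j _ => by ring
    simp only [hpl] at h
    have h1 : sInf {v | ∃ s' ∈ S, v = 1 - (T - c (sel s')) / W} ≤ 1 - (T - c k) / W := by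
      obtain ⟨sk, hsk, hk⟩ := hreg k
      refine csInf_le ⟨0, ?_⟩ ⟨sk, hsk, by rw [hk]⟩
      rintro _ ⟨s', _, rfl⟩
      rw [← hind]
      exact Finset.sum_nonneg fun j _ => mul_nonneg (hpn j) (by split_ifs <;> norm_num)
    have h2 : I / W ≤ sInf {v | ∃ s' ∈ S, v = CcondTS nE cbar ℓ L s' / W} := by
      refine le_csInf ⟨_, s, hs, rfl⟩ ?_
      rintro _ ⟨s', hs', rfl⟩
      exact div_le_div_of_nonneg_right (hIle s' hs') hW0
    have h2' : sInf {v | ∃ s' ∈ S, v = CcondTS nE cbar ℓ L s' / W}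
        ≤ CcondTS nE cbar ℓ L s / W := by
      refine csInf_le ⟨0, ?_⟩ ⟨s, hs, rfl⟩
      rintro _ ⟨s', _, rfl⟩
      exact div_nonneg (hTSn s') hW0
    have h3 : (CcondTS nE cbar ℓ L s / W
        - sInf {v | ∃ s' ∈ S, v = CcondTS nE cbar ℓ L s' / W}) ^ α ≤ (X / W) ^ α := by
      apply Real.rpow_le_rpow (by linarith) _ hα.1.le
      rw [hX, sub_div]; linarith
    have h4 : (c (sel s) - c k) / W ≤ β * (X / W) ^ α := by
      have h5 := mul_le_mul_of_nonneg_left h3 hβ.le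
      have h6 : (c (sel s) - c k) / W = (1 - (T - c (sel s)) / W) - (1 - (T - c k) / W) := by
        ring
      linarith
    rw [div_le_iff₀ hWp] at h4
    refine h4.trans ?_
    have h7 : β * (X / W) ^ α * W = W ^ (1 - α) * β * X ^ α := by
      rw [Real.div_rpow hX0 hW0, Real.rpow_sub hWp, Real.rpow_one]
      ring
    rw [h7]
    have := Real.rpow_le_rpow hW0 hWM hα1
    gcongr
  have hD : Dcond nE cbar sel L s = c (sel s) := by
    have : c (sel s) = ∑ j, if sel s = j then c j else 0 := by simp
    rw [this, Fin.sum_univ_succ]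
    rfl
  have hinf : sInf A ≤ L := csInf_le ⟨0, fun a ha => (hAsub ha).1⟩ hL
  rw [hD]
  unfold Dstar
  haveI : Nonempty (Fin nE) := ⟨⟨0, hnE⟩⟩
  obtain ⟨k, hk⟩ := exists_eq_ciInf_of_finite (f := cbar)
  rw [← hk]
  have k0 := key 0
  have k1 := key k.succ
  rw [hcz] at k0
  rw [hcs] at k1
  rcases min_choice (sInf A) (cbar k) with h | h <;> rw [h] <;> linarith
end

section
/- (Corollary 3.2: excess error bound for the single-stage surrogate over all measurable functions.) Assume there exist α ∈ (0,1] and β > 0 such that for every probability measure ν on X×{0,...,n_e} and every measurable r : X → ℝ^{n_e+1}, E_{ℓ01}(r) − E*_{ℓ01} ≤ β·(E_ℓ(r) − E*_ℓ)^α. Then for every probability measure μ on X×ℝ, every measurable predictor h : X → ℝ and every measurable deferral function r : X → ℝ^{n_e+1}, E_{L_def}(h,r) − E*_{L_def} ≤ Γ̄(E_{L_ℓ}(h,r) − E*_{L_ℓ}), where Γ̄(t) = max{ t, (n_e·(l̄ + Σ_{j=1}^{n_e} C_j))^{1−α}·β·t^α }. -/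
open MeasureTheory Finset ENNReal

variable {X : Type*}

/-- The deferral loss `L_def(h,r,x,y)`. -/
noncomputable def defLoss (nE : ℕ) (L : ℝ → ℝ → ℝ) (c : Fin nE → X × ℝ → ℝ)
    (sel : (Fin (nE + 1) → ℝ) → Fin (nE + 1))
    (h : X → ℝ) (r : X → Fin (nE + 1) → ℝ) (z : X × ℝ) : ℝ :=
  (if sel (r z.1) = 0 then L (h z.1) z.2 else 0)
    + ∑ j : Fin nE, if sel (r z.1) = j.succ then c j z else 0

/-- The single-stage surrogate loss `L_ℓ(h,r,x,y)`. -/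
noncomputable def surLoss (nE : ℕ) (L : ℝ → ℝ → ℝ) (c : Fin nE → X × ℝ → ℝ)
    (ℓ : (Fin (nE + 1) → ℝ) → Fin (nE + 1) → ℝ)
    (h : X → ℝ) (r : X → Fin (nE + 1) → ℝ) (z : X × ℝ) : ℝ :=
  (∑ j, c j z) * ℓ (r z.1) 0
    + ∑ j : Fin nE, (L (h z.1) z.2 + ∑ j' ∈ univ.erase j, c j' z) * ℓ (r z.1) j.succ
    - ((nE : ℝ) - 1) * L (h z.1) z.2

/-- The two-stage surrogate loss `L^h_ℓ(r,x,y)` (no `−(n_e−1)L` term). -/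
noncomputable def surLossTS (nE : ℕ) (L : ℝ → ℝ → ℝ) (c : Fin nE → X × ℝ → ℝ)
    (ℓ : (Fin (nE + 1) → ℝ) → Fin (nE + 1) → ℝ)
    (h : X → ℝ) (r : X → Fin (nE + 1) → ℝ) (z : X × ℝ) : ℝ :=
  (∑ j, c j z) * ℓ (r z.1) 0
    + ∑ j : Fin nE, (L (h z.1) z.2 + ∑ j' ∈ univ.erase j, c j' z) * ℓ (r z.1) j.succ

/-- Generalization error of a nonnegative loss, as a Lebesgue integral in `[0,∞]`. -/
noncomputable def genErr {W : Type*} [MeasurableSpace W] (μ : Measure W) (f : W → ℝ) : ℝ≥0∞ :=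
  ∫⁻ w, ENNReal.ofReal (f w) ∂μ

variable [MeasurableSpace X]

/-- Multi-class zero-one generalization error `E_{ℓ01}(r)`. -/
noncomputable def E01 (nE : ℕ) (sel : (Fin (nE + 1) → ℝ) → Fin (nE + 1))
    (ν : Measure (X × Fin (nE + 1))) (r : X → Fin (nE + 1) → ℝ) : ℝ≥0∞ :=
  ν {z | sel (r z.1) ≠ z.2}

/-- Multi-class surrogate generalization error `E_ℓ(r)`. -/
noncomputable def Eell (nE : ℕ) (ℓ : (Fin (nE + 1) → ℝ) → Fin (nE + 1) → ℝ)
    (ν : Measure (X × Fin (nE + 1))) (r : X → Fin (nE + 1) → ℝ) : ℝ≥0∞ :=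
  ∫⁻ z, ENNReal.ofReal (ℓ (r z.1) z.2) ∂ν

/-- Cost-sensitive sum `∑ₖ (∑ᵢ vᵢ − vₖ) lₖ`. -/
noncomputable def tsF {n : ℕ} (v l : Fin (n + 1) → ℝ) : ℝ := ∑ k, (∑ i, v i - v k) * l k

/-- Averaged single-stage surrogate. -/
noncomputable def surF {n : ℕ} (v l : Fin (n + 1) → ℝ) : ℝ := tsF v l - ((n : ℝ) - 1) * v 0

lemma tsF_zeroOne {n : ℕ} (v : Fin (n + 1) → ℝ) (s : Fin (n + 1)) :
    tsF v (fun k => if s ≠ k then 1 else 0) = ((n : ℝ) - 1) * ∑ i, v i + v s := by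
  unfold tsF
  have h1 : ∀ k, (∑ i, v i - v k) * (if s ≠ k then (1 : ℝ) else 0)
      = (∑ i, v i - v k) - (if s = k then (∑ i, v i - v k) else 0) := by
    intro k; by_cases h : s = k <;> simp [h]
  rw [Finset.sum_congr rfl fun k _ => h1 k]
  rw [Finset.sum_sub_distrib, Finset.sum_sub_distrib]
  simp
  ring

lemma sub_nonneg_aux {n : ℕ} {v : Fin (n + 1) → ℝ} (hv : ∀ k, 0 ≤ v k) (k : Fin (n + 1)) :
    0 ≤ ∑ i, v i - v k :=
  sub_nonneg.2 (Finset.single_le_sum (fun i _ => hv i) (Finset.mem_univ k))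

lemma surF_cons {n : ℕ} (b : ℝ) (a : Fin n → ℝ) (l : Fin (n + 1) → ℝ) :
    surF (Fin.cons b a) l = ((∑ j, a j) * l 0 + ∑ j : Fin n, (∑ i, a i - a j) * l j.succ)
      + b * (∑ j : Fin n, l j.succ - ((n : ℝ) - 1)) := by
  unfold surF tsF
  simp only [Fin.sum_univ_succ, Fin.cons_zero, Fin.cons_succ]
  have : ∀ j : Fin n, (b + ∑ i, a i - a j) * l j.succ
      = (∑ i, a i - a j) * l j.succ + b * l j.succ := fun j => by ring
  rw [Finset.sum_congr rfl fun j _ => this j, Finset.sum_add_distrib, ← Finset.mul_sum]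
  ring

lemma coef_nonneg {n : ℕ} (l : Fin (n + 1) → ℝ) (s : Fin (n + 1)) (h0 : ∀ k, 0 ≤ l k)
    (h1 : ∀ k, k ≠ s → 1 ≤ l k) : 0 ≤ ∑ j : Fin n, l j.succ - ((n : ℝ) - 1) := by
  have h2 : ∀ j : Fin n, 1 - (if s = j.succ then (1 : ℝ) else 0) ≤ l j.succ := by
    intro j
    by_cases h : s = j.succ
    · simpa [h] using h0 _
    · simpa [h] using h1 _ (Ne.symm h)
  have h3 := Finset.sum_le_sum fun (j : Fin n) (_ : j ∈ Finset.univ) => h2 j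
  rw [Finset.sum_sub_distrib] at h3
  have h4 : ∑ j : Fin n, (if s = j.succ then (1 : ℝ) else 0) ≤ 1 := by
    have : ∑ k : Fin (n + 1), (if s = k then (1 : ℝ) else 0) = 1 := by simp
    rw [Fin.sum_univ_succ] at this
    have : 0 ≤ (if s = 0 then (1 : ℝ) else 0) := by positivity
    linarith
  simp only [Finset.sum_const, Finset.card_univ, Fintype.card_fin, nsmul_eq_mul, mul_one] at h3
  linarith

lemma coef_ge {n : ℕ} (hn : 1 ≤ n) (l : Fin (n + 1) → ℝ) (D : ℝ) (hD : 1 ≤ D)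
    (h1 : ∀ k, k ≠ 0 → D ≤ l k) : D ≤ ∑ j : Fin n, l j.succ - ((n : ℝ) - 1) := by
  have h3 := Finset.sum_le_sum fun (j : Fin n) (_ : j ∈ Finset.univ) => h1 j.succ (Fin.succ_ne_zero j)
  simp at h3
  have : (1 : ℝ) ≤ n := by exact_mod_cast hn
  nlinarith

lemma surF_nonneg {n : ℕ} {b : ℝ} {a : Fin n → ℝ} {l : Fin (n + 1) → ℝ} (s : Fin (n + 1))
    (hb : 0 ≤ b) (ha : ∀ j, 0 ≤ a j) (h0 : ∀ k, 0 ≤ l k)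
    (h1 : ∀ k, k ≠ s → 1 ≤ l k) : 0 ≤ surF (Fin.cons b a) l := by
  rw [surF_cons]
  have := coef_nonneg l s h0 h1
  have h2 : 0 ≤ ∑ j, a j := Finset.sum_nonneg fun j _ => ha j
  have h3 : 0 ≤ ∑ j : Fin n, (∑ i, a i - a j) * l j.succ :=
    Finset.sum_nonneg fun j _ => mul_nonneg
      (sub_nonneg.2 (Finset.single_le_sum (fun i _ => ha i) (Finset.mem_univ j))) (h0 _)
  have := h0 0
  positivity

lemma surF_mono {n : ℕ} {b b' : ℝ} {a : Fin n → ℝ} {l : Fin (n + 1) → ℝ} (s : Fin (n + 1))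
    (hb : b' ≤ b) (h0 : ∀ k, 0 ≤ l k)
    (h1 : ∀ k, k ≠ s → 1 ≤ l k) : surF (Fin.cons b' a) l ≤ surF (Fin.cons b a) l := by
  rw [surF_cons, surF_cons]
  have := coef_nonneg l s h0 h1
  nlinarith

lemma surF_gap {n : ℕ} (hn : 1 ≤ n) {b b' : ℝ} {a : Fin n → ℝ} {l : Fin (n + 1) → ℝ}
    (D : ℝ) (hD : 1 ≤ D) (hb : b' ≤ b)
    (h1 : ∀ k, k ≠ 0 → D ≤ l k) :
    D * (b - b') + surF (Fin.cons b' a) l ≤ surF (Fin.cons b a) l := by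
  rw [surF_cons, surF_cons]
  have := coef_ge hn l D hD h1
  nlinarith

lemma measurable_tsF {Y : Type*} [MeasurableSpace Y] {n : ℕ} {v l : Y → Fin (n + 1) → ℝ}
    (hv : ∀ k, Measurable fun y => v y k) (hl : ∀ k, Measurable fun y => l y k) :
    Measurable fun y => tsF (v y) (l y) := by
  unfold tsF
  fun_prop

lemma two_holder (p q s t : ℝ≥0∞) (α : ℝ) (h0 : 0 < α) (h1 : α ≤ 1) :
    p ^ (1 - α) * s ^ α + q ^ (1 - α) * t ^ α ≤ (p + q) ^ (1 - α) * (s + t) ^ α := by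
  rcases eq_or_lt_of_le h1 with rfl | h1
  · simp
  have hc : (1 / (1 - α)).HolderConjugate (1 / α) := by
    rw [Real.holderConjugate_iff]
    constructor
    · rw [lt_div_iff₀ (by linarith)]; linarith
    · simp
  have := ENNReal.inner_le_Lp_mul_Lq (Finset.univ : Finset (Fin 2))
    ![p ^ (1 - α), q ^ (1 - α)] ![s ^ α, t ^ α] hc
  have h2 : 1 - α ≠ 0 := by linarith
  simpa [Fin.sum_univ_two, ← ENNReal.rpow_mul, h2, h0.ne'] using this

/-- The classification step: consistency on the reweighted measure. -/
lemma class_bound {Y : Type*} [MeasurableSpace Y] {n : ℕ}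
    (sel : (Fin (n + 1) → ℝ) → Fin (n + 1)) (hselmeas : Measurable sel)
    (ℓ : (Fin (n + 1) → ℝ) → Fin (n + 1) → ℝ)
    (hℓmeas : Measurable fun p : (Fin (n + 1) → ℝ) × Fin (n + 1) => ℓ p.1 p.2)
    (hℓ0 : ∀ s j, 0 ≤ ℓ s j)
    (hn : 1 ≤ n)
    (α β : ℝ) (hα : α ∈ Set.Ioc (0 : ℝ) 1)
    (hcons : ∀ ν : Measure (Y × Fin (n + 1)), IsProbabilityMeasure ν →
      ∀ r : Y → Fin (n + 1) → ℝ, Measurable r →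
        E01 n sel ν r
            - (⨅ (r' : Y → Fin (n + 1) → ℝ) (_ : Measurable r'), E01 n sel ν r')
          ≤ ENNReal.ofReal β *
            (Eell n ℓ ν r
              - ⨅ (r' : Y → Fin (n + 1) → ℝ) (_ : Measurable r'), Eell n ℓ ν r') ^ α)
    (m : Measure Y) [IsFiniteMeasure m] (v : Y → Fin (n + 1) → ℝ)
    (hvm : ∀ k, Measurable fun y => v y k) (hv0 : ∀ y k, 0 ≤ v y k)
    (M : ℝ) (hM : ∀ y, ∑ k, v y k ≤ M)
    (r : Y → Fin (n + 1) → ℝ) (hr : Measurable r)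
    (r' : Y → Fin (n + 1) → ℝ) (hr' : Measurable r') :
    ∫⁻ y, ENNReal.ofReal (v y (sel (r y))) ∂m ≤
      ∫⁻ y, ENNReal.ofReal (v y (sel (r' y))) ∂m +
      ENNReal.ofReal β * ((m Set.univ * ENNReal.ofReal (n * M)) ^ (1 - α) *
        (∫⁻ y, ENNReal.ofReal (tsF (v y) (ℓ (r y))) ∂m
          - ⨅ (r'' : Y → Fin (n + 1) → ℝ) (_ : Measurable r''),
              ∫⁻ y, ENNReal.ofReal (tsF (v y) (ℓ (r'' y))) ∂m) ^ α) := by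
  have hn' : (1 : ℝ) ≤ n := by exact_mod_cast hn
  set w : Fin (n + 1) → Y → ℝ≥0∞ := fun k y => ENNReal.ofReal (∑ i, v y i - v y k) with hw
  have hwm : ∀ k, Measurable (w k) := fun k => by
    simp only [hw]; fun_prop
  have hts : ∀ y (l : Fin (n + 1) → ℝ), (∀ k, 0 ≤ l k) →
      ENNReal.ofReal (tsF (v y) l) = ∑ k, w k y * ENNReal.ofReal (l k) := by
    intro y l hl
    unfold tsF
    rw [ENNReal.ofReal_sum_of_nonneg fun k _ => mul_nonneg (sub_nonneg_aux (hv0 y) k) (hl k)]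
    exact Finset.sum_congr rfl fun k _ => ENNReal.ofReal_mul (sub_nonneg_aux (hv0 y) k)
  have hsum : ∀ y, ∑ k, w k y = ENNReal.ofReal (n * ∑ i, v y i) := by
    intro y
    simp only [hw]
    rw [← ENNReal.ofReal_sum_of_nonneg fun k _ => sub_nonneg_aux (hv0 y) k]
    congr 1
    rw [Finset.sum_sub_distrib]; simp; ring
  set Q : ℝ≥0∞ := ∫⁻ y, ∑ k, w k y ∂m with hQ
  have hQle : Q ≤ m Set.univ * ENNReal.ofReal (n * M) := by
    calc Q ≤ ∫⁻ _, ENNReal.ofReal (n * M) ∂m := by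
          refine lintegral_mono fun y => ?_
          show ∑ k, w k y ≤ _
          rw [hsum]
          exact ENNReal.ofReal_le_ofReal (mul_le_mul_of_nonneg_left (hM y) (by positivity))
      _ = _ := by rw [lintegral_const, mul_comm]
  have hQtop : Q ≠ ∞ := ne_top_of_le_ne_top
    (ENNReal.mul_ne_top (measure_ne_top _ _) ENNReal.ofReal_ne_top) hQle
  by_cases hQ0 : Q = 0
  · have : ∫⁻ y, ENNReal.ofReal (v y (sel (r y))) ∂m ≤ Q := by
      refine lintegral_mono fun y => ?_
      show _ ≤ ∑ k, w k y
      rw [hsum]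
      refine ENNReal.ofReal_le_ofReal ?_
      have h1 := sub_nonneg_aux (hv0 y) (sel (r y))
      have h2 := hv0 y (sel (r y))
      nlinarith
    rw [hQ0] at this
    exact this.trans bot_le
  set ν : Measure (Y × Fin (n + 1)) :=
    Q⁻¹ • ∑ k, (m.withDensity (w k)).map (fun y => (y, k)) with hν
  have hint : ∀ g : Y × Fin (n + 1) → ℝ≥0∞, Measurable g →
      ∫⁻ z, g z ∂ν = Q⁻¹ * ∫⁻ y, ∑ k, w k y * g (y, k) ∂m := by
    intro g hg
    rw [hν, lintegral_smul_measure, lintegral_finsetSum_measure, smul_eq_mul,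
      lintegral_finsetSum _ (fun k _ => by fun_prop)]
    congr 1
    refine Finset.sum_congr rfl fun k _ => ?_
    rw [lintegral_map hg (by fun_prop),
      lintegral_withDensity_eq_lintegral_mul _ (hwm k) (by fun_prop)]
    rfl
  have hprob : IsProbabilityMeasure ν := by
    constructor
    rw [← lintegral_one, hint _ measurable_const]
    simp only [mul_one]
    exact ENNReal.inv_mul_cancel hQ0 hQtop
  have hell : ∀ ρ : Y → Fin (n + 1) → ℝ, Measurable ρ →
      Eell n ℓ ν ρ = Q⁻¹ * ∫⁻ y, ENNReal.ofReal (tsF (v y) (ℓ (ρ y))) ∂m := by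
    intro ρ hρ
    unfold Eell
    rw [hint]
    · congr 1
      exact lintegral_congr fun y => (hts y (ℓ (ρ y)) (hℓ0 _)).symm
    · exact (hℓmeas.comp ((hρ.comp measurable_fst).prodMk measurable_snd)).ennreal_ofReal
  set R : ℝ≥0∞ := ∫⁻ y, ENNReal.ofReal (((n : ℝ) - 1) * ∑ i, v y i) ∂m with hR
  have hRtop : R ≠ ∞ := by
    refine ne_top_of_le_ne_top hQtop (lintegral_mono fun y => ?_)
    show _ ≤ ∑ k, w k y
    rw [hsum]
    refine ENNReal.ofReal_le_ofReal ?_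
    have : 0 ≤ ∑ i, v y i := Finset.sum_nonneg fun i _ => hv0 y i
    nlinarith
  have h01 : ∀ ρ : Y → Fin (n + 1) → ℝ, Measurable ρ →
      E01 n sel ν ρ = Q⁻¹ * (R + ∫⁻ y, ENNReal.ofReal (v y (sel (ρ y))) ∂m) := by
    intro ρ hρ
    have hS : MeasurableSet {z : Y × Fin (n + 1) | sel (ρ z.1) ≠ z.2} :=
      (measurableSet_eq_fun (by fun_prop) (by fun_prop)).compl
    unfold E01
    rw [← lintegral_indicator_one hS, hint _ (measurable_one.indicator hS)]
    congr 1
    rw [hR, ← lintegral_add_left (by fun_prop)]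
    refine lintegral_congr fun y => ?_
    have hA : 0 ≤ ((n : ℝ) - 1) * ∑ i, v y i :=
      mul_nonneg (by linarith) (Finset.sum_nonneg fun i _ => hv0 y i)
    rw [← ENNReal.ofReal_add hA (hv0 _ _), ← tsF_zeroOne, hts]
    · refine Finset.sum_congr rfl fun k _ => ?_
      by_cases h : sel (ρ y) = k <;> simp [h, Set.indicator]
    · intro k; split_ifs <;> norm_num
  have key := hcons ν hprob r hr
  set I := ⨅ (r'' : Y → Fin (n + 1) → ℝ) (_ : Measurable r''),
              ∫⁻ y, ENNReal.ofReal (tsF (v y) (ℓ (r'' y))) ∂m with hI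
  set Tr := ∫⁻ y, ENNReal.ofReal (tsF (v y) (ℓ (r y))) ∂m with hTr
  have hQi : Q⁻¹ ≠ ∞ := ENNReal.inv_ne_top.2 hQ0
  have k1 : Eell n ℓ ν r
      - (⨅ (r' : Y → Fin (n + 1) → ℝ) (_ : Measurable r'), Eell n ℓ ν r') ≤ Q⁻¹ * (Tr - I) := by
    rw [ENNReal.mul_sub fun _ _ => hQi, hell r hr]
    refine tsub_le_tsub_left ?_ _
    refine le_iInf₂ fun ρ hρ => ?_
    rw [hell ρ hρ]
    gcongr
    exact iInf₂_le ρ hρ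
  have k2 : E01 n sel ν r ≤ E01 n sel ν r' + ENNReal.ofReal β * (Q⁻¹ * (Tr - I)) ^ α := by
    have h1 : E01 n sel ν r ≤ ENNReal.ofReal β * (Q⁻¹ * (Tr - I)) ^ α +
        (⨅ (r' : Y → Fin (n + 1) → ℝ) (_ : Measurable r'), E01 n sel ν r') := by
      rw [← tsub_le_iff_right]
      refine key.trans ?_
      gcongr
      exact hα.1.le
    refine h1.trans ?_
    rw [add_comm]
    gcongr
    exact iInf₂_le r' hr'
  rw [h01 r hr, h01 r' hr'] at k2
  have k3 := mul_le_mul_right k2 Q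
  have kc : ∀ t, Q * (Q⁻¹ * t) = t := fun t => by
    rw [← mul_assoc, ENNReal.mul_inv_cancel hQ0 hQtop, one_mul]
  rw [kc, mul_add, kc, add_assoc, ENNReal.add_le_add_iff_left hRtop] at k3
  refine k3.trans (add_le_add le_rfl ?_)
  rw [ENNReal.mul_rpow_of_nonneg _ _ hα.1.le, ← mul_assoc, mul_comm Q, mul_assoc, ← mul_assoc Q]
  gcongr
  have : Q * Q⁻¹ ^ α = Q ^ (1 - α) := by
    rw [ENNReal.inv_rpow, ← ENNReal.rpow_neg, sub_eq_add_neg, ENNReal.rpow_add _ _ hQ0 hQtop,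
      ENNReal.rpow_one]
  rw [this]
  exact ENNReal.rpow_le_rpow hQle (by linarith [hα.2])

/-- The regression-error step: `e ≤ β q^(1-α) (D e)^α` when `e ≤ q` and `1 ≤ β D^α`. -/
lemma reg_bound (e q : ℝ≥0∞) (α β D : ℝ) (hα : α ∈ Set.Ioc (0 : ℝ) 1) (hβ : 0 < β) (hD : 1 ≤ D)
    (hβD : 1 ≤ β * D ^ α) (he : e ≤ q) (hq : q ≠ ∞) :
    e ≤ ENNReal.ofReal β * (q ^ (1 - α) * (ENNReal.ofReal D * e) ^ α) := by
  by_cases he0 : e = 0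
  · rw [he0]; exact bot_le
  have het : e ≠ ∞ := ne_top_of_le_ne_top hq he
  have h1 : e = e ^ (1 - α) * e ^ α := by
    rw [← ENNReal.rpow_add _ _ he0 het]; simp
  have h2 : (1 : ℝ≥0∞) ≤ ENNReal.ofReal β * ENNReal.ofReal D ^ α := by
    rw [ENNReal.ofReal_rpow_of_nonneg (by linarith) hα.1.le, ← ENNReal.ofReal_mul hβ.le]
    simpa using ENNReal.ofReal_le_ofReal hβD
  calc e = 1 * (e ^ (1 - α) * e ^ α) := by rw [one_mul, ← h1]
    _ ≤ (ENNReal.ofReal β * ENNReal.ofReal D ^ α) * (q ^ (1 - α) * e ^ α) := by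
        gcongr
        linarith [hα.2]
    _ = _ := by rw [ENNReal.mul_rpow_of_nonneg _ _ hα.1.le]; ring

/-- Core bound, after averaging over the label. -/
lemma core_bound {Y : Type*} [MeasurableSpace Y] {n : ℕ}
    (sel : (Fin (n + 1) → ℝ) → Fin (n + 1)) (hselmeas : Measurable sel)
    (ℓ : (Fin (n + 1) → ℝ) → Fin (n + 1) → ℝ)
    (hℓmeas : Measurable fun p : (Fin (n + 1) → ℝ) × Fin (n + 1) => ℓ p.1 p.2)
    (hℓ0 : ∀ s j, 0 ≤ ℓ s j)
    (D : ℝ) (hD : 1 ≤ D)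
    (hℓD : ∀ s j, j ≠ sel s → D ≤ ℓ s j)
    (hn : 1 ≤ n)
    (α β : ℝ) (hα : α ∈ Set.Ioc (0 : ℝ) 1) (hβ : 0 < β) (hβD : 1 ≤ β * D ^ α)
    (hcons : ∀ ν : Measure (Y × Fin (n + 1)), IsProbabilityMeasure ν →
      ∀ r : Y → Fin (n + 1) → ℝ, Measurable r →
        E01 n sel ν r
            - (⨅ (r' : Y → Fin (n + 1) → ℝ) (_ : Measurable r'), E01 n sel ν r')
          ≤ ENNReal.ofReal β *
            (Eell n ℓ ν r
              - ⨅ (r' : Y → Fin (n + 1) → ℝ) (_ : Measurable r'), Eell n ℓ ν r') ^ α)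
    (P : Measure Y) [IsProbabilityMeasure P]
    (lbar : ℝ) (C : Fin n → ℝ)
    (b b' : Y → ℝ) (hbm : Measurable b) (hbm' : Measurable b')
    (hb : ∀ y, b y ∈ Set.Icc 0 lbar) (hb' : ∀ y, b' y ∈ Set.Icc 0 lbar)
    (a : Y → Fin n → ℝ) (ham : Measurable a) (ha : ∀ y j, a y j ∈ Set.Icc 0 (C j))
    (r : Y → Fin (n + 1) → ℝ) (hr : Measurable r)
    (r' : Y → Fin (n + 1) → ℝ) (hr' : Measurable r')
    (Es : ℝ≥0∞) (hEt : Es ≠ ∞)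
    (hE : ∀ S : Set Y, MeasurableSet S → ∀ bt : Y → ℝ, (∀ y ∈ S, bt y = b' y) →
      (∀ y, y ∉ S → bt y = b y) → ∀ ρ : Y → Fin (n + 1) → ℝ, Measurable ρ →
      Es ≤ ∫⁻ y, ENNReal.ofReal (surF (Fin.cons (bt y) (a y)) (ℓ (ρ y))) ∂P) :
    ∫⁻ y, ENNReal.ofReal ((Fin.cons (b y) (a y) : Fin (n + 1) → ℝ) (sel (r y))) ∂P ≤
      ∫⁻ y, ENNReal.ofReal ((Fin.cons (b' y) (a y) : Fin (n + 1) → ℝ) (sel (r' y))) ∂P +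
      ENNReal.ofReal (((n : ℝ) * (lbar + ∑ j, C j)) ^ (1 - α) * β) *
        (∫⁻ y, ENNReal.ofReal (surF (Fin.cons (b y) (a y)) (ℓ (r y))) ∂P - Es) ^ α := by
  classical
  have hn' : (1 : ℝ) ≤ n := by exact_mod_cast hn
  have hℓ1 : ∀ s j, j ≠ sel s → 1 ≤ ℓ s j := fun s j h => hD.trans (hℓD s j h)
  set N : Set Y := {y | sel (r y) = 0 ∧ b' y < b y ∧ sel (r' y) = 0} with hN
  have ms : ∀ ρ : Y → Fin (n + 1) → ℝ, Measurable ρ → MeasurableSet {y | sel (ρ y) = 0} :=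
    fun ρ hρ => measurableSet_eq_fun (hselmeas.comp hρ) measurable_const
  have mlt : MeasurableSet {y | b' y < b y} := measurableSet_lt hbm' hbm
  have hNm : MeasurableSet N := (ms r hr).inter (mlt.inter (ms r' hr'))
  set S : Set Y := {y | b' y < b y ∧ (¬ sel (r y) = 0 ∨ sel (r' y) = 0)} with hS
  have hSm : MeasurableSet S := mlt.inter ((ms r hr).compl.union (ms r' hr'))
  set bt : Y → ℝ := fun y => if y ∈ S then b' y else b y with hbt
  have hbtm : Measurable bt := Measurable.ite hSm hbm' hbm
  have hbt0 : ∀ y, bt y ∈ Set.Icc 0 lbar := by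
    intro y; simp only [hbt]; split_ifs
    · exact hb' y
    · exact hb y
  have hbtb : ∀ y, bt y ≤ b y := by
    intro y; simp only [hbt]; split_ifs with h
    · exact h.1.le
    · exact le_rfl
  have hbtN : ∀ y ∈ N, bt y = b' y := by
    intro y hy
    have : y ∈ S := ⟨hy.2.1, Or.inr hy.2.2⟩
    simp [hbt, this]
  set v : Y → Fin (n + 1) → ℝ := fun y => Fin.cons (bt y) (a y) with hv
  have hvm : ∀ k, Measurable fun y => v y k := by
    intro k
    refine Fin.cases ?_ (fun j => ?_) k
    · simpa [hv] using hbtm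
    · simp only [hv, Fin.cons_succ]; fun_prop
  have hv0 : ∀ y k, 0 ≤ v y k := by
    intro y k
    refine Fin.cases ?_ (fun j => ?_) k
    · simpa [hv] using (hbt0 y).1
    · simpa [hv] using (ha y j).1
  have hvM : ∀ y, ∑ k, v y k ≤ lbar + ∑ j, C j := by
    intro y
    simp only [hv, Fin.sum_univ_succ, Fin.cons_zero, Fin.cons_succ]
    exact add_le_add (hbt0 y).2 (Finset.sum_le_sum fun j _ => (ha y j).2)
  have hℓρ : ∀ ρ : Y → Fin (n + 1) → ℝ, Measurable ρ → ∀ k, Measurable fun y => ℓ (ρ y) k :=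
    fun ρ hρ k => hℓmeas.comp (hρ.prodMk measurable_const)
  have hlbar : 0 ≤ lbar := (hbt0 (P.nonempty_of_neZero.some)).1.trans
    (hbt0 (P.nonempty_of_neZero.some)).2
  have hC0 : 0 ≤ ∑ j, C j := Finset.sum_nonneg fun j _ =>
    (ha (P.nonempty_of_neZero.some) j).1.trans (ha (P.nonempty_of_neZero.some) j).2
  set B : ℝ := (n : ℝ) * (lbar + ∑ j, C j) with hB
  have hB0 : 0 ≤ B := by positivity
  have hlB : lbar ≤ B := by nlinarith
  -- classification on the complement of `N`
  have hclass := class_bound sel hselmeas ℓ hℓmeas hℓ0 hn α β hα hcons (P.restrict Nᶜ) v hvm hv0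
    _ hvM r hr r' hr'
  rw [← hB, Measure.restrict_apply_univ] at hclass
  set Tr := ∫⁻ y in Nᶜ, ENNReal.ofReal (tsF (v y) (ℓ (r y))) ∂P with hTr
  set I := ⨅ (ρ : Y → Fin (n + 1) → ℝ) (_ : Measurable ρ),
    ∫⁻ y in Nᶜ, ENNReal.ofReal (tsF (v y) (ℓ (ρ y))) ∂P with hI
  -- the regression part
  set e := ∫⁻ y in N, ENNReal.ofReal (b y - b' y) ∂P with he
  have heq : e ≤ P N * ENNReal.ofReal B := by
    calc e ≤ ∫⁻ _ in N, ENNReal.ofReal B ∂P := by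
          refine lintegral_mono fun y => ENNReal.ofReal_le_ofReal ?_
          linarith [(hb y).2, (hb' y).1]
      _ = _ := by rw [setLIntegral_const, mul_comm]
  have hreg := reg_bound e _ α β D hα hβ hD hβD heq
    (ENNReal.mul_ne_top (measure_ne_top _ _) ENNReal.ofReal_ne_top)
  -- surrogate accounting
  set c0 := ∫⁻ y in Nᶜ, ENNReal.ofReal (((n : ℝ) - 1) * bt y) ∂P with hc0
  have hc0t : c0 ≠ ∞ := by
    refine ne_top_of_le_ne_top (b := ∫⁻ _ in Nᶜ, ENNReal.ofReal (((n : ℝ) - 1) * lbar) ∂P) ?_ ?_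
    · rw [setLIntegral_const]
      exact ENNReal.mul_ne_top ENNReal.ofReal_ne_top (measure_ne_top _ _)
    · refine lintegral_mono fun y => ENNReal.ofReal_le_ofReal ?_
      exact mul_le_mul_of_nonneg_left (hbt0 y).2 (by linarith)
  set SN := ∫⁻ y in N, ENNReal.ofReal (surF (Fin.cons (b' y) (a y)) (ℓ (r y))) ∂P with hSN
  have hsplit : ∀ ρ : Y → Fin (n + 1) → ℝ,
      ∫⁻ y in Nᶜ, ENNReal.ofReal (surF (v y) (ℓ (ρ y))) ∂P + c0
        = ∫⁻ y in Nᶜ, ENNReal.ofReal (tsF (v y) (ℓ (ρ y))) ∂P := by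
    intro ρ
    rw [hc0, ← lintegral_add_right _ (by fun_prop)]
    refine lintegral_congr fun y => ?_
    rw [← ENNReal.ofReal_add (surF_nonneg (sel (ρ y)) (hbt0 y).1 (fun j => (ha y j).1)
      (hℓ0 _) (hℓ1 _)) (mul_nonneg (by linarith) (hbt0 y).1)]
    congr 1
    simp [surF, hv]
  have hlow : Es + c0 ≤ I + SN := by
    rw [hI, ENNReal.iInf_add]
    refine le_iInf fun ρ => ?_
    rw [ENNReal.iInf_add]
    refine le_iInf fun hρ => ?_
    set ρ' : Y → Fin (n + 1) → ℝ := fun y => if y ∈ N then r y else ρ y with hρ'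
    have h1 := hE S hSm bt (fun y hy => by simp [hbt, hy]) (fun y hy => by simp [hbt, hy]) ρ'
      (Measurable.ite hNm hr hρ)
    rw [← lintegral_add_compl _ hNm] at h1
    have h2 : ∫⁻ y in N, ENNReal.ofReal (surF (Fin.cons (bt y) (a y)) (ℓ (ρ' y))) ∂P = SN := by
      refine setLIntegral_congr_fun hNm fun y hy => ?_
      simp only [hρ', hy, if_true, hbtN y hy]
    have h3 : ∫⁻ y in Nᶜ, ENNReal.ofReal (surF (Fin.cons (bt y) (a y)) (ℓ (ρ' y))) ∂P
        = ∫⁻ y in Nᶜ, ENNReal.ofReal (surF (v y) (ℓ (ρ y))) ∂P := by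
      refine setLIntegral_congr_fun hNm.compl fun y hy => ?_
      have hy' : y ∉ N := hy
      simp only [hρ', hy', if_false, hv]
    rw [h2, h3] at h1
    rw [← hsplit ρ]
    calc Es + c0 ≤ _ := add_le_add_left h1 c0
      _ = _ := by ring
  set Sur := ∫⁻ y, ENNReal.ofReal (surF (Fin.cons (b y) (a y)) (ℓ (r y))) ∂P with hSur
  have hup : Tr + (SN + ENNReal.ofReal D * e) ≤ Sur + c0 := by
    rw [hTr, ← hsplit r, hSur, ← lintegral_add_compl (fun y => ENNReal.ofReal
      (surF (Fin.cons (b y) (a y)) (ℓ (r y)))) hNm]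
    have h1 : ∫⁻ y in Nᶜ, ENNReal.ofReal (surF (v y) (ℓ (r y))) ∂P ≤
        ∫⁻ y in Nᶜ, ENNReal.ofReal (surF (Fin.cons (b y) (a y)) (ℓ (r y))) ∂P := by
      refine lintegral_mono fun y => ENNReal.ofReal_le_ofReal ?_
      exact surF_mono (sel (r y)) (hbtb y) (hℓ0 _) (hℓ1 _)
    have h2 : SN + ENNReal.ofReal D * e ≤
        ∫⁻ y in N, ENNReal.ofReal (surF (Fin.cons (b y) (a y)) (ℓ (r y))) ∂P := by
      rw [hSN, he, ← lintegral_const_mul _ (by fun_prop), ← lintegral_add_right _ (by fun_prop)]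
      refine setLIntegral_mono' hNm fun y hy => ?_
      rw [← ENNReal.ofReal_mul (by linarith), ← ENNReal.ofReal_add]
      · refine ENNReal.ofReal_le_ofReal ?_
        rw [add_comm]
        refine surF_gap hn D hD hy.2.1.le fun k hk => hℓD _ _ ?_
        rw [hy.1]; exact hk
      · exact surF_nonneg (sel (r y)) (hb' y).1 (fun j => (ha y j).1) (hℓ0 _) (hℓ1 _)
      · exact mul_nonneg (by linarith) (by linarith [hy.2.1])
    calc _ ≤ (∫⁻ y in Nᶜ, ENNReal.ofReal (surF (Fin.cons (b y) (a y)) (ℓ (r y))) ∂P + c0) +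
          ∫⁻ y in N, ENNReal.ofReal (surF (Fin.cons (b y) (a y)) (ℓ (r y))) ∂P :=
          add_le_add (add_le_add h1 le_rfl) h2
      _ = _ := by ring
  have hIT : I ≤ Tr := iInf₂_le r hr
  have hT : (Tr - I) + ENNReal.ofReal D * e ≤ Sur - Es := by
    refine ENNReal.le_sub_of_add_le_right hEt ?_
    rw [← ENNReal.add_le_add_iff_right hc0t]
    calc (Tr - I) + ENNReal.ofReal D * e + Es + c0
        = (Tr - I) + ENNReal.ofReal D * e + (Es + c0) := by ring
      _ ≤ (Tr - I) + ENNReal.ofReal D * e + (I + SN) := by gcongr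
      _ = (Tr - I + I) + (SN + ENNReal.ofReal D * e) := by ring
      _ = Tr + (SN + ENNReal.ofReal D * e) := by rw [tsub_add_cancel_of_le hIT]
      _ ≤ _ := hup
  -- deferral accounting
  rw [← lintegral_add_compl _ hNm,
    ← lintegral_add_compl (fun y => ENNReal.ofReal
      ((Fin.cons (b' y) (a y) : Fin (n + 1) → ℝ) (sel (r' y)))) hNm]
  have d1 : ∫⁻ y in N, ENNReal.ofReal ((Fin.cons (b y) (a y) : Fin (n + 1) → ℝ) (sel (r y))) ∂P
      = ∫⁻ y in N, ENNReal.ofReal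
        ((Fin.cons (b' y) (a y) : Fin (n + 1) → ℝ) (sel (r' y))) ∂P + e := by
    rw [he, ← lintegral_add_right _ (by fun_prop)]
    refine setLIntegral_congr_fun hNm fun y hy => ?_
    simp only [hy.1, hy.2.2, Fin.cons_zero]
    rw [← ENNReal.ofReal_add (hb' y).1 (by linarith [hy.2.1])]
    congr 1; ring
  have d2 : ∫⁻ y in Nᶜ, ENNReal.ofReal ((Fin.cons (b y) (a y) : Fin (n + 1) → ℝ) (sel (r y))) ∂P
      = ∫⁻ y in Nᶜ, ENNReal.ofReal (v y (sel (r y))) ∂P := by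
    refine setLIntegral_congr_fun hNm.compl fun y hy => ?_
    have hy' : ¬ (sel (r y) = 0 ∧ b' y < b y ∧ sel (r' y) = 0) := hy
    simp only [hv]
    by_cases h : sel (r y) = 0
    · have : y ∉ S := fun hs => hy' ⟨h, hs.1, hs.2.resolve_left (fun hh => hh h)⟩
      simp [hbt, this]
    · obtain ⟨j, hj⟩ := Fin.exists_succ_eq.2 h
      simp [← hj]
  have d3 : ∫⁻ y in Nᶜ, ENNReal.ofReal (v y (sel (r' y))) ∂P ≤
      ∫⁻ y in Nᶜ, ENNReal.ofReal ((Fin.cons (b' y) (a y) : Fin (n + 1) → ℝ) (sel (r' y))) ∂P := by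
    refine lintegral_mono fun y => ENNReal.ofReal_le_ofReal ?_
    simp only [hv]
    by_cases h : sel (r' y) = 0
    · simp only [h, Fin.cons_zero, hbt]
      split_ifs with hs
      · exact le_rfl
      · by_contra hlt
        exact hs ⟨not_le.1 hlt, Or.inr h⟩
    · obtain ⟨j, hj⟩ := Fin.exists_succ_eq.2 h
      simp [← hj]
  have hPB : P Nᶜ * ENNReal.ofReal B + P N * ENNReal.ofReal B = ENNReal.ofReal B := by
    rw [← add_mul, add_comm, prob_add_prob_compl hNm, one_mul]
  have hhol := two_holder (P Nᶜ * ENNReal.ofReal B) (P N * ENNReal.ofReal B) (Tr - I)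
    (ENNReal.ofReal D * e) α hα.1 hα.2
  rw [hPB] at hhol
  rw [d1, d2]
  have hK : ENNReal.ofReal (B ^ (1 - α) * β) = ENNReal.ofReal β * ENNReal.ofReal B ^ (1 - α) := by
    rw [ENNReal.ofReal_rpow_of_nonneg hB0 (by linarith [hα.2]), ← ENNReal.ofReal_mul hβ.le, mul_comm]
  rw [hK]
  set dN := ∫⁻ y in N, ENNReal.ofReal
        ((Fin.cons (b' y) (a y) : Fin (n + 1) → ℝ) (sel (r' y))) ∂P
  set dG := ∫⁻ y in Nᶜ, ENNReal.ofReal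
        ((Fin.cons (b' y) (a y) : Fin (n + 1) → ℝ) (sel (r' y))) ∂P
  calc _ ≤ (dN + ENNReal.ofReal β * ((P N * ENNReal.ofReal B) ^ (1 - α)
            * (ENNReal.ofReal D * e) ^ α)) +
          (dG + ENNReal.ofReal β * ((P Nᶜ * ENNReal.ofReal B) ^ (1 - α) * (Tr - I) ^ α)) :=
        add_le_add (add_le_add le_rfl hreg) (hclass.trans (add_le_add d3 le_rfl))
    _ = (dN + dG) + ENNReal.ofReal β * ((P Nᶜ * ENNReal.ofReal B) ^ (1 - α) * (Tr - I) ^ α +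
          (P N * ENNReal.ofReal B) ^ (1 - α) * (ENNReal.ofReal D * e) ^ α) := by ring
    _ ≤ (dN + dG) + ENNReal.ofReal β * (ENNReal.ofReal B ^ (1 - α) *
          ((Tr - I) + ENNReal.ofReal D * e) ^ α) := by gcongr
    _ ≤ (dN + dG) + ENNReal.ofReal β * (ENNReal.ofReal B ^ (1 - α) * (Sur - Es) ^ α) := by
        gcongr
        exact hα.1.le
    _ = _ := by ring

/-- Consistency forces the surrogate to be large on wrong labels. -/
lemma ell_lower {Y : Type*} [MeasurableSpace Y] [Nonempty Y] {n : ℕ}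
    (sel : (Fin (n + 1) → ℝ) → Fin (n + 1)) (hselmeas : Measurable sel)
    (hsel : ∀ (s : Fin (n + 1) → ℝ) (j : Fin (n + 1)), s j ≤ s (sel s))
    (ℓ : (Fin (n + 1) → ℝ) → Fin (n + 1) → ℝ)
    (hℓmeas : Measurable fun p : (Fin (n + 1) → ℝ) × Fin (n + 1) => ℓ p.1 p.2)
    (hℓ0 : ∀ s j, 0 ≤ ℓ s j)
    (α β : ℝ) (hα : α ∈ Set.Ioc (0 : ℝ) 1) (hβ : 0 < β)
    (hcons : ∀ ν : Measure (Y × Fin (n + 1)), IsProbabilityMeasure ν →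
      ∀ r : Y → Fin (n + 1) → ℝ, Measurable r →
        E01 n sel ν r
            - (⨅ (r' : Y → Fin (n + 1) → ℝ) (_ : Measurable r'), E01 n sel ν r')
          ≤ ENNReal.ofReal β *
            (Eell n ℓ ν r
              - ⨅ (r' : Y → Fin (n + 1) → ℝ) (_ : Measurable r'), Eell n ℓ ν r') ^ α)
    (s : Fin (n + 1) → ℝ) (j : Fin (n + 1)) (hj : j ≠ sel s) :
    (β⁻¹) ^ (1 / α) ≤ ℓ s j := by
  have y0 : Y := Classical.arbitrary Y
  have h := hcons (Measure.dirac (y0, j)) inferInstance (fun _ => s) measurable_const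
  have mS : ∀ t : Fin (n + 1) → ℝ, MeasurableSet {z : Y × Fin (n + 1) | sel t ≠ z.2} :=
    fun t => (measurableSet_eq_fun measurable_const measurable_snd).compl
  have h1 : E01 n sel (Measure.dirac (y0, j)) (fun _ => s) = 1 := by
    unfold E01
    rw [Measure.dirac_apply' _ (mS s)]
    simp [Set.indicator, hj.symm]
  have h2 : (⨅ (r' : Y → Fin (n + 1) → ℝ) (_ : Measurable r'),
      E01 n sel (Measure.dirac (y0, j)) r') = 0 := by
    refine le_antisymm ((iInf₂_le (fun _ => Pi.single j 1) measurable_const).trans ?_) bot_le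
    have hs : sel (Pi.single j 1) = j := by
      by_contra hne
      have := hsel (Pi.single j 1) j
      rw [Pi.single_eq_same, Pi.single_eq_of_ne hne] at this
      linarith
    unfold E01
    rw [Measure.dirac_apply' _ (mS _)]
    simp [Set.indicator, hs]
  have h3 : Eell n ℓ (Measure.dirac (y0, j)) (fun _ => s) = ENNReal.ofReal (ℓ s j) := by
    unfold Eell
    have hm : Measurable fun z : Y × Fin (n + 1) => ENNReal.ofReal (ℓ s z.2) :=
      (hℓmeas.comp (measurable_const.prodMk measurable_snd)).ennreal_ofReal
    exact lintegral_dirac' _ hm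
  rw [h1, h2, h3, tsub_zero] at h
  have h4 : (1 : ℝ≥0∞) ≤ ENNReal.ofReal (β * ℓ s j ^ α) := by
    rw [ENNReal.ofReal_mul hβ.le, ← ENNReal.ofReal_rpow_of_nonneg (hℓ0 s j) hα.1.le]
    refine h.trans ?_
    gcongr
    · exact hα.1.le
    · exact tsub_le_self
  rw [ENNReal.one_le_ofReal] at h4
  have h5 : β⁻¹ ≤ ℓ s j ^ α := by
    rw [inv_le_iff_one_le_mul₀' hβ]; exact h4
  calc (β⁻¹) ^ (1 / α) ≤ (ℓ s j ^ α) ^ (1 / α) :=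
        Real.rpow_le_rpow (by positivity) h5 (by have := hα.1; positivity)
    _ = ℓ s j := by
        rw [← Real.rpow_mul (hℓ0 s j), mul_one_div_cancel hα.1.ne', Real.rpow_one]

/-- Corollary 3.2: excess error bound for the single-stage surrogate
over all measurable functions. -/
theorem single_stage_excess_error_bound {X : Type*} [MeasurableSpace X]
    (nE : ℕ) (hnE : 1 ≤ nE)
    (lbar : ℝ) (hlbar : 0 < lbar)
    (C : Fin nE → ℝ) (hC : ∀ j, 0 < C j)
    (L : ℝ → ℝ → ℝ) (hLmeas : Measurable fun p : ℝ × ℝ => L p.1 p.2)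
    (hL : ∀ y' y, L y' y ∈ Set.Icc 0 lbar)
    (c : Fin nE → X × ℝ → ℝ) (hcmeas : ∀ j, Measurable (c j))
    (hc : ∀ j z, c j z ∈ Set.Ioc 0 (C j))
    (sel : (Fin (nE + 1) → ℝ) → Fin (nE + 1)) (hselmeas : Measurable sel)
    (hsel : ∀ (s : Fin (nE + 1) → ℝ) (j : Fin (nE + 1)), s j ≤ s (sel s))
    (ℓ : (Fin (nE + 1) → ℝ) → Fin (nE + 1) → ℝ)
    (hℓmeas : Measurable fun p : (Fin (nE + 1) → ℝ) × Fin (nE + 1) => ℓ p.1 p.2)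
    (hℓ0 : ∀ s j, 0 ≤ ℓ s j)
    (hℓ1 : ∀ s j, j ≠ sel s → 1 ≤ ℓ s j)
    (α β : ℝ) (hα : α ∈ Set.Ioc (0 : ℝ) 1) (hβ : 0 < β)
    (hcons : ∀ ν : Measure (X × Fin (nE + 1)), IsProbabilityMeasure ν →
      ∀ r : X → Fin (nE + 1) → ℝ, Measurable r →
        E01 nE sel ν r
            - (⨅ (r' : X → Fin (nE + 1) → ℝ) (_ : Measurable r'), E01 nE sel ν r')
          ≤ ENNReal.ofReal β *
            (Eell nE ℓ ν r
              - ⨅ (r' : X → Fin (nE + 1) → ℝ) (_ : Measurable r'), Eell nE ℓ ν r') ^ α)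
    (μ : Measure (X × ℝ)) [IsProbabilityMeasure μ]
    (h : X → ℝ) (hh : Measurable h)
    (r : X → Fin (nE + 1) → ℝ) (hr : Measurable r) :
    genErr μ (defLoss nE L c sel h r)
        - (⨅ (h' : X → ℝ) (_ : Measurable h') (r' : X → Fin (nE + 1) → ℝ)
            (_ : Measurable r'), genErr μ (defLoss nE L c sel h' r'))
      ≤ max
          (genErr μ (surLoss nE L c ℓ h r)
            - ⨅ (h' : X → ℝ) (_ : Measurable h') (r' : X → Fin (nE + 1) → ℝ)
                (_ : Measurable r'), genErr μ (surLoss nE L c ℓ h' r'))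
          (ENNReal.ofReal (((nE : ℝ) * (lbar + ∑ j, C j)) ^ (1 - α) * β) *
            (genErr μ (surLoss nE L c ℓ h r)
              - ⨅ (h' : X → ℝ) (_ : Measurable h') (r' : X → Fin (nE + 1) → ℝ)
                  (_ : Measurable r'), genErr μ (surLoss nE L c ℓ h' r')) ^ α) := by
  classical
  have hX : Nonempty (X × ℝ) := μ.nonempty_of_neZero
  have : Nonempty X := hX.map Prod.fst
  set D : ℝ := max 1 ((β⁻¹) ^ (1 / α)) with hDdef
  have hD : 1 ≤ D := le_max_left _ _
  have hℓD : ∀ s j, j ≠ sel s → D ≤ ℓ s j := fun s j hj => max_le (hℓ1 s j hj)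
    (ell_lower sel hselmeas hsel ℓ hℓmeas hℓ0 α β hα hβ hcons s j hj)
  have hβD : 1 ≤ β * D ^ α := by
    have h1 : β⁻¹ ≤ D ^ α := by
      calc β⁻¹ = ((β⁻¹) ^ (1 / α)) ^ α := by
            rw [← Real.rpow_mul (by positivity), one_div_mul_cancel hα.1.ne', Real.rpow_one]
        _ ≤ D ^ α := Real.rpow_le_rpow (by positivity) (le_max_right _ _) hα.1.le
    rwa [inv_le_iff_one_le_mul₀' hβ] at h1
  set κ := μ.condKernel with hκ
  set P := μ.fst with hP
  set bl : (X → ℝ) → X → ℝ := fun g x => ∫ y, L (g x) y ∂(κ x) with hbl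
  set a : X → Fin nE → ℝ := fun x j => ∫ y, c j (x, y) ∂(κ x) with ha
  have mL : ∀ g : X → ℝ, Measurable g → Measurable fun z : X × ℝ => L (g z.1) z.2 :=
    fun g hg => hLmeas.comp ((hg.comp measurable_fst).prodMk measurable_snd)
  have iL : ∀ (g : X → ℝ), Measurable g → ∀ x, Integrable (fun y => L (g x) y) (κ x) := by
    intro g hg x
    refine Integrable.of_bound ((mL g hg).comp measurable_prodMk_left).aestronglyMeasurable lbar
      (Filter.Eventually.of_forall fun y => ?_)
    rw [Real.norm_of_nonneg (hL _ _).1]; exact (hL _ _).2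
  have ic : ∀ j x, Integrable (fun y => c j (x, y)) (κ x) := by
    intro j x
    refine Integrable.of_bound ((hcmeas j).comp measurable_prodMk_left).aestronglyMeasurable (C j)
      (Filter.Eventually.of_forall fun y => ?_)
    rw [Real.norm_of_nonneg (hc _ _).1.le]; exact (hc _ _).2
  have mbl : ∀ g : X → ℝ, Measurable g → Measurable (bl g) := fun g hg =>
    ((mL g hg).stronglyMeasurable.integral_kernel_prod_right').measurable
  have ma : Measurable a := measurable_pi_lambda _ fun j =>
    ((hcmeas j).stronglyMeasurable.integral_kernel_prod_right').measurable
  have bbl : ∀ g : X → ℝ, Measurable g → ∀ x, bl g x ∈ Set.Icc 0 lbar := by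
    intro g hg x
    refine ⟨integral_nonneg fun y => (hL _ _).1, ?_⟩
    have := integral_mono (iL g hg x) (integrable_const lbar) fun y => (hL (g x) y).2
    simpa using this
  have ba : ∀ x j, a x j ∈ Set.Icc 0 (C j) := by
    intro x j
    refine ⟨integral_nonneg fun y => (hc _ _).1.le, ?_⟩
    have := integral_mono (ic j x) (integrable_const (C j)) fun y => (hc j (x, y)).2
    simpa using this
  have hgen : ∀ f : X × ℝ → ℝ, Measurable f → (∀ z, 0 ≤ f z) →
      (∀ x, Integrable (fun y => f (x, y)) (κ x)) →
      genErr μ f = ∫⁻ x, ENNReal.ofReal (∫ y, f (x, y) ∂(κ x)) ∂P := by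
    intro f hf hf0 hfi
    unfold genErr
    rw [← Measure.lintegral_condKernel hf.ennreal_ofReal]
    refine lintegral_congr fun x => ?_
    rw [ofReal_integral_eq_lintegral_ofReal (hfi x) (Filter.Eventually.of_forall fun y => hf0 _)]
  -- the deferral loss
  have hdef_eq : ∀ (g : X → ℝ) (ρ : X → Fin (nE + 1) → ℝ) (z : X × ℝ),
      defLoss nE L c sel g ρ z
        = (Fin.cons (L (g z.1) z.2) (fun j => c j z) : Fin (nE + 1) → ℝ) (sel (ρ z.1)) := by
    intro g ρ z
    unfold defLoss
    by_cases hs : sel (ρ z.1) = 0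
    · simp [hs, (Fin.succ_ne_zero _).symm]
    · obtain ⟨j, hj⟩ := Fin.exists_succ_eq.2 hs
      simp [← hj]
  have hdef : ∀ (g : X → ℝ), Measurable g → ∀ (ρ : X → Fin (nE + 1) → ℝ), Measurable ρ →
      genErr μ (defLoss nE L c sel g ρ) = ∫⁻ x, ENNReal.ofReal
        ((Fin.cons (bl g x) (a x) : Fin (nE + 1) → ℝ) (sel (ρ x))) ∂P := by
    intro g hg ρ hρ
    have hms : Measurable fun z : X × ℝ => sel (ρ z.1) := hselmeas.comp (hρ.comp measurable_fst)
    rw [hgen]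
    · refine lintegral_congr fun x => ?_
      simp only [hdef_eq]
      generalize sel (ρ x) = k
      congr 1
      refine Fin.cases ?_ (fun j => ?_) k <;> simp [hbl, ha]
    · unfold defLoss
      have hmk : ∀ k, MeasurableSet {z : X × ℝ | sel (ρ z.1) = k} := fun k =>
        measurableSet_eq_fun hms measurable_const
      refine (Measurable.ite (hmk 0) (mL g hg) measurable_const).add ?_
      exact Finset.measurable_fun_sum _ fun j _ =>
        Measurable.ite (hmk _) (hcmeas j) measurable_const
    · intro z
      rw [hdef_eq]
      generalize sel (ρ z.1) = k
      refine Fin.cases ?_ (fun j => ?_) k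
      · simpa using (hL _ _).1
      · simpa using (hc j z).1.le
    · intro x
      simp only [hdef_eq]
      generalize sel (ρ x) = k
      refine Fin.cases ?_ (fun j => ?_) k
      · simpa using iL g hg x
      · simpa using ic j x
  -- the surrogate loss
  have hsur_eq : ∀ (g : X → ℝ) (ρ : X → Fin (nE + 1) → ℝ) (z : X × ℝ),
      surLoss nE L c ℓ g ρ z = surF (Fin.cons (L (g z.1) z.2) (fun j => c j z)) (ℓ (ρ z.1)) := by
    intro g ρ z
    unfold surLoss surF tsF
    simp only [Fin.sum_univ_succ, Fin.cons_zero, Fin.cons_succ]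
    congr 1
    congr 1
    · ring
    · refine Finset.sum_congr rfl fun j _ => ?_
      rw [Finset.sum_erase_eq_sub (Finset.mem_univ j)]
      ring
  have hsur : ∀ (g : X → ℝ), Measurable g → ∀ (ρ : X → Fin (nE + 1) → ℝ), Measurable ρ →
      genErr μ (surLoss nE L c ℓ g ρ) = ∫⁻ x, ENNReal.ofReal
        (surF (Fin.cons (bl g x) (a x)) (ℓ (ρ x))) ∂P := by
    intro g hg ρ hρ
    have hmℓ : ∀ k, Measurable fun z : X × ℝ => ℓ (ρ z.1) k := fun k =>
      hℓmeas.comp ((hρ.comp measurable_fst).prodMk measurable_const)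
    have hmL := mL g hg
    have i1 : ∀ x, Integrable (fun y => ∑ j, c j (x, y)) (κ x) := fun x =>
      integrable_finsetSum _ fun j _ => ic j x
    have i2 : ∀ x (j : Fin nE), Integrable
        (fun y => (∑ i, c i (x, y) - c j (x, y)) * ℓ (ρ x) j.succ) (κ x) := fun x j =>
      ((i1 x).sub (ic j x)).mul_const _
    have i3 : ∀ x, Integrable (fun y => ∑ j : Fin nE,
        (∑ i, c i (x, y) - c j (x, y)) * ℓ (ρ x) j.succ) (κ x) := fun x =>
      integrable_finsetSum _ fun j _ => i2 x j
    have i4 : ∀ x, Integrable (fun y => (∑ j, c j (x, y)) * ℓ (ρ x) 0) (κ x) := fun x =>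
      (i1 x).mul_const _
    have i5 : ∀ x, Integrable (fun y => (∑ j, c j (x, y)) * ℓ (ρ x) 0 + ∑ j : Fin nE,
        (∑ i, c i (x, y) - c j (x, y)) * ℓ (ρ x) j.succ) (κ x) := fun x => (i4 x).add (i3 x)
    have i6 : ∀ x, Integrable (fun y => L (g x) y *
        (∑ j : Fin nE, ℓ (ρ x) j.succ - ((nE : ℝ) - 1))) (κ x) := fun x =>
      (iL g hg x).mul_const _
    rw [hgen]
    · refine lintegral_congr fun x => ?_
      congr 1
      simp only [hsur_eq, surF_cons]
      rw [integral_add (i5 x) (i6 x), integral_add (i4 x) (i3 x), integral_mul_const,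
        integral_mul_const, integral_finsetSum _ (fun j _ => ic j x),
        integral_finsetSum _ (fun j _ => i2 x j)]
      congr 2
      refine Finset.sum_congr rfl fun j _ => ?_
      rw [integral_mul_const, integral_sub (i1 x) (ic j x),
        integral_finsetSum _ (fun j _ => ic j x)]
    · unfold surLoss
      fun_prop
    · intro z
      rw [hsur_eq]
      exact surF_nonneg (sel (ρ z.1)) (hL _ _).1 (fun j => (hc j z).1.le) (hℓ0 _) (hℓ1 _)
    · intro x
      simp only [hsur_eq, surF_cons]
      exact (i5 x).add (i6 x)
  set Es := ⨅ (h' : X → ℝ) (_ : Measurable h') (r' : X → Fin (nE + 1) → ℝ)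
                (_ : Measurable r'), genErr μ (surLoss nE L c ℓ h' r') with hEs
  have hEsle : ∀ (g : X → ℝ), Measurable g → ∀ (ρ : X → Fin (nE + 1) → ℝ), Measurable ρ →
      Es ≤ genErr μ (surLoss nE L c ℓ g ρ) := fun g hg ρ hρ =>
    (iInf₂_le g hg).trans (iInf₂_le ρ hρ)
  have hnE' : (1 : ℝ) ≤ nE := by exact_mod_cast hnE
  have hEt : Es ≠ ∞ := by
    refine ne_top_of_le_ne_top ?_ (hEsle h hh (fun _ => 0) measurable_const)
    rw [hsur h hh _ measurable_const]
    refine ne_top_of_le_ne_top (b := ∫⁻ _, ENNReal.ofReal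
      (∑ k, (lbar + ∑ j, C j) * ℓ 0 k) ∂P) ?_ (lintegral_mono fun x =>
        ENNReal.ofReal_le_ofReal ?_)
    · rw [lintegral_const]
      exact ENNReal.mul_ne_top ENNReal.ofReal_ne_top (measure_ne_top _ _)
    · unfold surF tsF
      have h1 : 0 ≤ ((nE : ℝ) - 1) * bl h x := mul_nonneg (by linarith) (bbl h hh x).1
      have h2 : ∀ k, 0 ≤ (Fin.cons (bl h x) (a x) : Fin (nE + 1) → ℝ) k := by
        intro k
        refine Fin.cases ?_ (fun j => ?_) k
        · simpa using (bbl h hh x).1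
        · simpa using (ba x j).1
      have h3 : ∑ k, (Fin.cons (bl h x) (a x) : Fin (nE + 1) → ℝ) k ≤ lbar + ∑ j, C j := by
        simp only [Fin.sum_univ_succ, Fin.cons_zero, Fin.cons_succ]
        exact add_le_add (bbl h hh x).2 (Finset.sum_le_sum fun j _ => (ba x j).2)
      rw [Fin.cons_zero]
      refine (sub_le_self _ h1).trans (Finset.sum_le_sum fun k _ => ?_)
      exact mul_le_mul_of_nonneg_right (by linarith [h2 k]) (hℓ0 _ _)
  refine le_trans ?_ (le_max_right _ _)
  rw [tsub_le_iff_left]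
  simp only [ENNReal.iInf_add]
  refine le_iInf₂ fun h' hh' => le_iInf₂ fun r' hr' => ?_
  rw [hdef h hh r hr, hdef h' hh' r' hr', hsur h hh r hr]
  refine core_bound sel hselmeas ℓ hℓmeas hℓ0 D hD hℓD hnE α β hα hβ hβD hcons P lbar C
    (bl h) (bl h') (mbl h hh) (mbl h' hh') (bbl h hh) (bbl h' hh') a ma ba r hr r' hr' Es hEt ?_
  intro S hS bt hb1 hb2 ρ hρ
  have hm : Measurable (fun x => if x ∈ S then h' x else h x) := Measurable.ite hS hh' hh
  refine (hEsle _ hm ρ hρ).trans (le_of_eq ?_)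
  rw [hsur _ hm ρ hρ]
  refine lintegral_congr fun x => ?_
  have : bl (fun x => if x ∈ S then h' x else h x) x = bt x := by
    by_cases hx : x ∈ S
    · rw [hb1 x hx]; simp [hbl, hx]
    · rw [hb2 x hx]; simp [hbl, hx]
  rw [this]
end

section
/- (Corollary 4.2: two-stage excess error bound for the deferral function.) Fix a measurable predictor h : X → ℝ. Assume there exist α ∈ (0,1] and β > 0 such that for every probability measure ν on X×{0,...,n_e} and every measurable r : X → ℝ^{n_e+1}, E_{ℓ01}(r) − E*_{ℓ01} ≤ β·(E_ℓ(r) − E*_ℓ)^α. Then for every probability measure μ on X×ℝ and every measurable r : X → ℝ^{n_e+1}, E_{L^h_def}(r) − inf_{r' measurable} E_{L^h_def}(r') ≤ (n_e·(l̄ + Σ_{j=1}^{n_e} C_j))^{1−α}·β·(E_{L^h_ℓ}(r) − inf_{r' measurable} E_{L^h_ℓ}(r'))^α. -/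
open MeasureTheory Finset ENNReal

variable {X : Type*}

variable [MeasurableSpace X]

/-- Cost vector: index `0` is the predictor's loss, index `j+1` the cost of expert `j`. -/
noncomputable def costVec (nE : ℕ) (L : ℝ → ℝ → ℝ) (c : Fin nE → X × ℝ → ℝ)
    (h : X → ℝ) (j : Fin (nE + 1)) (z : X × ℝ) : ℝ :=
  Fin.cases (L (h z.1) z.2) (fun i => c i z) j

/-- Weight of class `j`: the sum of all the costs but the `j`-th. -/
noncomputable def wgt (nE : ℕ) (L : ℝ → ℝ → ℝ) (c : Fin nE → X × ℝ → ℝ)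
    (h : X → ℝ) (j : Fin (nE + 1)) (z : X × ℝ) : ℝ :=
  (∑ i, costVec nE L c h i z) - costVec nE L c h j z

lemma defLoss_eq (nE : ℕ) (L : ℝ → ℝ → ℝ) (c : Fin nE → X × ℝ → ℝ)
    (sel : (Fin (nE + 1) → ℝ) → Fin (nE + 1))
    (h : X → ℝ) (r : X → Fin (nE + 1) → ℝ) (z : X × ℝ) :
    defLoss nE L c sel h r z = costVec nE L c h (sel (r z.1)) z := by
  unfold defLoss
  generalize sel (r z.1) = k
  refine Fin.cases ?_ (fun i => ?_) k
  · have : ∀ j : Fin nE, ¬ ((0 : Fin (nE + 1)) = j.succ) := fun j => (Fin.succ_ne_zero j).symm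
    simp [costVec, this]
  · simp [costVec, Fin.succ_ne_zero]

lemma surLossTS_eq (nE : ℕ) (L : ℝ → ℝ → ℝ) (c : Fin nE → X × ℝ → ℝ)
    (ℓ : (Fin (nE + 1) → ℝ) → Fin (nE + 1) → ℝ)
    (h : X → ℝ) (r : X → Fin (nE + 1) → ℝ) (z : X × ℝ) :
    surLossTS nE L c ℓ h r z = ∑ j, wgt nE L c h j z * ℓ (r z.1) j := by
  unfold surLossTS
  rw [Fin.sum_univ_succ]
  congr 1
  · simp [wgt, costVec, Fin.sum_univ_succ]
  · refine Finset.sum_congr rfl fun j _ => ?_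
    congr 1
    have := Finset.add_sum_erase univ (fun j' => c j' z) (mem_univ j)
    simp only [wgt, costVec, Fin.sum_univ_succ, Fin.cases_zero, Fin.cases_succ]
    linarith

/-- The unnormalized multi-class measure. -/
noncomputable def rho (nE : ℕ) (L : ℝ → ℝ → ℝ) (c : Fin nE → X × ℝ → ℝ)
    (h : X → ℝ) (μ : Measure (X × ℝ)) : Measure (X × Fin (nE + 1)) :=
  ∑ j : Fin (nE + 1), Measure.map (fun z : X × ℝ => (z.1, j))
    (μ.withDensity fun z => ENNReal.ofReal (wgt nE L c h j z))

lemma lintegral_rho (nE : ℕ) (L : ℝ → ℝ → ℝ) (c : Fin nE → X × ℝ → ℝ)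
    (h : X → ℝ) (μ : Measure (X × ℝ)) (hw : ∀ j, Measurable (wgt nE L c h j))
    (f : X × Fin (nE + 1) → ℝ≥0∞) (hf : Measurable f) :
    ∫⁻ p, f p ∂(rho nE L c h μ)
      = ∫⁻ z, ∑ j, ENNReal.ofReal (wgt nE L c h j z) * f (z.1, j) ∂μ := by
  have hm : ∀ j : Fin (nE + 1), Measurable (fun z : X × ℝ => (z.1, j)) := fun j => by fun_prop
  rw [rho, lintegral_finsetSum_measure, lintegral_finsetSum]
  · refine Finset.sum_congr rfl fun j _ => ?_
    rw [lintegral_map hf (hm j)]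
    exact lintegral_withDensity_eq_lintegral_mul μ (hw j).ennreal_ofReal (hf.comp (hm j))
  · intro j _
    exact (hw j).ennreal_ofReal.mul (hf.comp (hm j))

lemma ennreal_excess_scale {ι : Type*} (Q K : ℝ≥0∞) (hQ : Q ≠ ⊤) (hQ0 : Q ≠ 0) (hK : K ≠ ⊤)
    (a b : ι → ℝ≥0∞) (hab : ∀ i, Q * a i = K + b i) (i : ι) :
    b i - (⨅ j, b j) = Q * (a i - ⨅ j, a j) := by
  rw [ENNReal.mul_sub (fun _ _ => hQ), ENNReal.mul_iInf_of_ne hQ0 hQ, hab]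
  simp_rw [hab]
  rw [← ENNReal.add_iInf, ENNReal.add_sub_add_eq_sub_left hK]

/-- Corollary 4.2: two-stage excess error bound for the deferral
function, with a fixed predictor `h`. -/
theorem two_stage_excess_error_bound_second_stage {X : Type*} [MeasurableSpace X]
    (nE : ℕ) (hnE : 1 ≤ nE)
    (lbar : ℝ) (hlbar : 0 < lbar)
    (C : Fin nE → ℝ) (hC : ∀ j, 0 < C j)
    (L : ℝ → ℝ → ℝ) (hLmeas : Measurable fun p : ℝ × ℝ => L p.1 p.2)
    (hL : ∀ y' y, L y' y ∈ Set.Icc 0 lbar)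
    (c : Fin nE → X × ℝ → ℝ) (hcmeas : ∀ j, Measurable (c j))
    (hc : ∀ j z, c j z ∈ Set.Ioc 0 (C j))
    (sel : (Fin (nE + 1) → ℝ) → Fin (nE + 1)) (hselmeas : Measurable sel)
    (hsel : ∀ (s : Fin (nE + 1) → ℝ) (j : Fin (nE + 1)), s j ≤ s (sel s))
    (ℓ : (Fin (nE + 1) → ℝ) → Fin (nE + 1) → ℝ)
    (hℓmeas : Measurable fun p : (Fin (nE + 1) → ℝ) × Fin (nE + 1) => ℓ p.1 p.2)
    (hℓ0 : ∀ s j, 0 ≤ ℓ s j)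
    (hℓ1 : ∀ s j, j ≠ sel s → 1 ≤ ℓ s j)
    (h : X → ℝ) (hh : Measurable h)
    (α β : ℝ) (hα : α ∈ Set.Ioc (0 : ℝ) 1) (hβ : 0 < β)
    (hcons : ∀ ν : Measure (X × Fin (nE + 1)), IsProbabilityMeasure ν →
      ∀ r : X → Fin (nE + 1) → ℝ, Measurable r →
        E01 nE sel ν r
            - (⨅ (r' : X → Fin (nE + 1) → ℝ) (_ : Measurable r'), E01 nE sel ν r')
          ≤ ENNReal.ofReal β *
            (Eell nE ℓ ν r
              - ⨅ (r' : X → Fin (nE + 1) → ℝ) (_ : Measurable r'), Eell nE ℓ ν r') ^ α)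
    (μ : Measure (X × ℝ)) [IsProbabilityMeasure μ]
    (r : X → Fin (nE + 1) → ℝ) (hr : Measurable r) :
    genErr μ (defLoss nE L c sel h r)
        - (⨅ (r' : X → Fin (nE + 1) → ℝ) (_ : Measurable r'),
            genErr μ (defLoss nE L c sel h r'))
      ≤ ENNReal.ofReal (((nE : ℝ) * (lbar + ∑ j, C j)) ^ (1 - α) * β) *
          (genErr μ (surLossTS nE L c ℓ h r)
            - ⨅ (r' : X → Fin (nE + 1) → ℝ) (_ : Measurable r'),
                genErr μ (surLossTS nE L c ℓ h r')) ^ α := by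
  obtain ⟨hα0, hα1⟩ := hα
  have hcost : ∀ j, Measurable (costVec nE L c h j) := by
    intro j
    refine Fin.cases ?_ (fun i => ?_) j
    · exact hLmeas.comp ((hh.comp measurable_fst).prodMk measurable_snd)
    · exact hcmeas i
  have hcost0 : ∀ j z, 0 ≤ costVec nE L c h j z := by
    intro j z
    refine Fin.cases ?_ (fun i => ?_) j
    · exact (hL _ _).1
    · exact (hc i z).1.le
  have hw : ∀ j, Measurable (wgt nE L c h j) := fun j =>
    (Finset.measurable_sum _ fun i _ => hcost i).sub (hcost j)
  have hw0 : ∀ j z, 0 ≤ wgt nE L c h j z := fun j z => sub_nonneg.2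
    (Finset.single_le_sum (f := fun i => costVec nE L c h i z)
      (fun i _ => hcost0 i z) (mem_univ j))
  set S : X × ℝ → ℝ := fun z => ∑ i, costVec nE L c h i z with hS
  have hSm : Measurable S := Finset.measurable_sum _ fun i _ => hcost i
  have hSeq : ∀ z, S z = L (h z.1) z.2 + ∑ j, c j z := fun z => by
    simp [hS, costVec, Fin.sum_univ_succ]
  have hSle : ∀ z, S z ≤ lbar + ∑ j, C j := fun z => by
    rw [hSeq]
    exact add_le_add (hL _ _).2 (Finset.sum_le_sum fun j _ => (hc j z).2)
  have hSpos : ∀ z, 0 < S z := fun z => by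
    rw [hSeq]
    have : 0 < ∑ j, c j z := Finset.sum_pos (fun j _ => (hc j z).1) ⟨⟨0, hnE⟩, mem_univ _⟩
    linarith [(hL (h z.1) z.2).1]
  have hnR : (1 : ℝ) ≤ nE := by exact_mod_cast hnE
  have hwsum : ∀ z, ∑ j, wgt nE L c h j z = nE * S z := fun z => by
    simp only [wgt, Finset.sum_sub_distrib, Finset.sum_const, Finset.card_univ, Fintype.card_fin,
      nsmul_eq_mul, hS]
    push_cast
    ring
  set B : ℝ := (nE : ℝ) * (lbar + ∑ j, C j) with hB
  have hBpos : 0 < B := by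
    have : 0 ≤ ∑ j, C j := Finset.sum_nonneg fun j _ => (hC j).le
    positivity
  set Q : ℝ≥0∞ := ∫⁻ z, ENNReal.ofReal (nE * S z) ∂μ with hQdef
  have hQB : Q ≤ ENNReal.ofReal B := by
    calc Q ≤ ∫⁻ _, ENNReal.ofReal B ∂μ := lintegral_mono fun z =>
          ENNReal.ofReal_le_ofReal (mul_le_mul_of_nonneg_left (hSle z) (by linarith))
      _ = _ := by simp
  have hQt : Q ≠ ⊤ := ne_top_of_le_ne_top ENNReal.ofReal_ne_top hQB
  have hQ0 : Q ≠ 0 := by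
    intro h0
    rw [hQdef, lintegral_eq_zero_iff (hSm.const_mul _).ennreal_ofReal] at h0
    have : ∀ᵐ z ∂μ, False := by
      filter_upwards [h0] with z hz
      have h1 : 0 < (nE : ℝ) * S z := mul_pos (by linarith) (hSpos z)
      simp only [Pi.zero_apply, ENNReal.ofReal_eq_zero] at hz
      linarith
    obtain ⟨z, hz⟩ := this.exists
    exact hz
  set K : ℝ≥0∞ := ∫⁻ z, ENNReal.ofReal (((nE : ℝ) - 1) * S z) ∂μ with hKdef
  have hKt : K ≠ ⊤ := by
    refine ne_top_of_le_ne_top hQt (lintegral_mono fun z => ENNReal.ofReal_le_ofReal ?_)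
    nlinarith [hSpos z]
  set ν : Measure (X × Fin (nE + 1)) := Q⁻¹ • rho nE L c h μ with hν
  have hρ1 : rho nE L c h μ Set.univ = Q := by
    have := lintegral_rho nE L c h μ hw (fun _ => 1) measurable_const
    rw [lintegral_one] at this
    rw [this, hQdef]
    refine lintegral_congr fun z => ?_
    simp only [mul_one]
    rw [← ENNReal.ofReal_sum_of_nonneg (fun j _ => hw0 j z), hwsum]
  have hνp : IsProbabilityMeasure ν := ⟨by
    rw [hν, Measure.smul_apply, hρ1, smul_eq_mul, ENNReal.inv_mul_cancel hQ0 hQt]⟩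
  have key01 : ∀ r' : {r' : X → Fin (nE + 1) → ℝ // Measurable r'},
      Q * E01 nE sel ν r'.1 = K + genErr μ (defLoss nE L c sel h r'.1) := by
    rintro ⟨r', hr'⟩
    have hset : MeasurableSet {z : X × Fin (nE + 1) | sel (r' z.1) ≠ z.2} :=
      (measurableSet_eq_fun (hselmeas.comp (hr'.comp measurable_fst)) measurable_snd).compl
    unfold E01 genErr
    rw [hν, Measure.smul_apply, smul_eq_mul, ← mul_assoc, ENNReal.mul_inv_cancel hQ0 hQt, one_mul,
      ← lintegral_indicator_one hset, lintegral_rho nE L c h μ hw _ (measurable_one.indicator hset),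
      hKdef, ← lintegral_add_left (hSm.const_mul _).ennreal_ofReal]
    refine lintegral_congr fun z => ?_
    rw [defLoss_eq, ← ENNReal.ofReal_add (mul_nonneg (by linarith) (hSpos z).le) (hcost0 _ z)]
    have h1 : ∀ j, ENNReal.ofReal (wgt nE L c h j z) *
        Set.indicator {z : X × Fin (nE + 1) | sel (r' z.1) ≠ z.2} 1 (z.1, j)
        = ENNReal.ofReal (wgt nE L c h j z - if sel (r' z.1) = j then wgt nE L c h j z else 0) := by
      intro j
      by_cases hj : sel (r' z.1) = j
      · simp [hj]
      · simp [hj]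
    rw [Finset.sum_congr rfl fun j _ => h1 j, ← ENNReal.ofReal_sum_of_nonneg]
    · rw [Finset.sum_sub_distrib, hwsum, Finset.sum_ite_eq univ (sel (r' z.1)), if_pos (mem_univ _)]
      congr 1
      simp only [wgt, hS]
      ring
    · intro j _
      split_ifs
      · simp
      · simpa using hw0 j z
  have keyell : ∀ r' : {r' : X → Fin (nE + 1) → ℝ // Measurable r'},
      Q * Eell nE ℓ ν r'.1 = 0 + genErr μ (surLossTS nE L c ℓ h r'.1) := by
    rintro ⟨r', hr'⟩
    unfold Eell genErr
    rw [hν, lintegral_smul_measure, smul_eq_mul, ← mul_assoc, ENNReal.mul_inv_cancel hQ0 hQt,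
      one_mul, zero_add, lintegral_rho nE L c h μ hw]
    · refine lintegral_congr fun z => ?_
      rw [surLossTS_eq, ENNReal.ofReal_sum_of_nonneg
        (fun j _ => mul_nonneg (hw0 j z) (hℓ0 _ _))]
      exact Finset.sum_congr rfl fun j _ => (ENNReal.ofReal_mul (hw0 j z)).symm
    · exact (hℓmeas.comp ((hr'.comp measurable_fst).prodMk measurable_snd)).ennreal_ofReal
  have hc1 := hcons ν hνp r hr
  simp only [iInf_subtype'] at hc1 ⊢
  have e1 := ennreal_excess_scale Q K hQt hQ0 hKt _ _ key01 ⟨r, hr⟩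
  have e2 := ennreal_excess_scale Q 0 hQt hQ0 ENNReal.zero_ne_top _ _ keyell ⟨r, hr⟩
  simp only at e1 e2
  rw [e1, e2]
  set T := Eell nE ℓ ν r - ⨅ j : {r' : X → Fin (nE + 1) → ℝ // Measurable r'}, Eell nE ℓ ν j.1
  have hQpow : Q = Q ^ (1 - α) * Q ^ α := by
    rw [← ENNReal.rpow_add _ _ hQ0 hQt]
    simp
  calc Q * _ ≤ Q * (ENNReal.ofReal β * T ^ α) := by gcongr
    _ = Q ^ (1 - α) * Q ^ α * (ENNReal.ofReal β * T ^ α) := by rw [← hQpow]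
    _ = Q ^ (1 - α) * ENNReal.ofReal β * (Q * T) ^ α := by
      rw [ENNReal.mul_rpow_of_nonneg _ _ hα0.le]
      ring
    _ ≤ ENNReal.ofReal (B ^ (1 - α) * β) * (Q * T) ^ α := by
      rw [ENNReal.ofReal_mul (by positivity), ← ENNReal.ofReal_rpow_of_pos hBpos]
      gcongr
end
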